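/- arXiv:2112.04220 — 5 statements merged into one kernel-verified Lean document; each statement's English description precedes it below -/
import Mathlib

section
/- Let G be a finite group with o(G) < 13/6 (where 13/6 = o(S_3)). Then G is an elementary abelian 2-group, i.e., every element g of G satisfies g² = 1. -/
/-- The average element order `o(G) = ψ(G)/|G|` of a finite group `G`,
where `ψ(G) = ∑_{x ∈ G} |x|` is the sum of the orders of all elements of `G`. -/
noncomputable def avgOrder (G : Type*) [Group G] [Fintype G] : ℚ :=
  (∑ x : G, (orderOf x : ℚ)) / (Fintype.card G : ℚ)

/-!
A homomorphism `φ : G → G` that inverts more than three quarters of the elements inverts all of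
them: if `φ` inverts `a`, `b` and `a * b`, then `a` and `b` commute, so every inverted `a` commutes
with more than half of `G` and is therefore central; since every element is a product of two
inverted ones, which commute, it is inverted as well. For `φ = id` this says that a group which is
not an elementary abelian 2-group has at least `|G| / 4` elements with `x ^ 2 ≠ 1`. Those have
order at least `3`, and at least `4` when `3 ∤ |G|`, while all other elements except `1` have
order `2`; this forces `ψ(G) ≥ 13 |G| / 6`.
-/

open Finset Fintype
open scoped Pointwise

section InvertingHom

variable {G : Type*} [Group G]

theorem commute_of_map_eq_inv {φ : G →* G} {a b : G} (ha : φ a = a⁻¹) (hb : φ b = b⁻¹)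
    (hab : φ (a * b) = (a * b)⁻¹) : Commute a b := by
  rw [map_mul, ha, hb, mul_inv_rev] at hab
  exact Commute.inv_inv_iff.mp hab

variable [Fintype G]

theorem mem_mul_of_card_lt_card_add_card [DecidableEq G] {A B : Finset G}
    (h : card G < #A + #B) (g : G) : g ∈ A * B := by
  have hcard : #(B.image (g * ·⁻¹)) = #B :=
    card_image_of_injective B ((mul_right_injective g).comp inv_injective)
  obtain ⟨a, ha⟩ : (A ∩ B.image (g * ·⁻¹)).Nonempty :=
    inter_nonempty_of_card_lt_card_add_card (subset_univ _) (subset_univ _)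
      (by rwa [hcard, card_univ])
  obtain ⟨haA, haB⟩ := mem_inter.mp ha
  obtain ⟨b, hb, rfl⟩ := mem_image.mp haB
  exact mem_mul.mpr ⟨_, haA, b, hb, inv_mul_cancel_right g b⟩

theorem subgroup_eq_top_of_card_lt_two_mul_card {H : Subgroup G} {S : Finset G}
    (hSH : ∀ x ∈ S, x ∈ H) (hS : card G < 2 * #S) : H = ⊤ := by
  classical
  refine (Subgroup.eq_top_iff' H).mpr fun g ↦ ?_
  obtain ⟨a, ha, b, hb, rfl⟩ := mem_mul.mp <|
    mem_mul_of_card_lt_card_add_card (show card G < #S + #S by omega) g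
  exact H.mul_mem (hSH a ha) (hSH b hb)

variable [DecidableEq G]

theorem mem_center_of_map_eq_inv {φ : G →* G} (hφ : 3 * card G < 4 * #{x | φ x = x⁻¹}) {a : G}
    (ha : φ a = a⁻¹) : a ∈ Subgroup.center G := by
  set S : Finset G := {x | φ x = x⁻¹}
  have hS {x : G} : x ∈ S ↔ φ x = x⁻¹ := mem_filter_univ x
  have hcard : #(S.image (a⁻¹ * ·)) = #S := card_image_of_injective S (mul_right_injective a⁻¹)
  have hlarge : card G < 2 * #(S ∩ S.image (a⁻¹ * ·)) := by
    have hunion := card_union_add_card_inter S (S.image (a⁻¹ * ·))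
    have hle := card_le_univ (S ∪ S.image (a⁻¹ * ·))
    omega
  have hcomm : ∀ b ∈ S ∩ S.image (a⁻¹ * ·), b ∈ Subgroup.centralizer {a} := by
    intro b hb
    obtain ⟨hbS, hb'⟩ := mem_inter.mp hb
    obtain ⟨c, hc, rfl⟩ := mem_image.mp hb'
    have hac : φ (a * (a⁻¹ * c)) = (a * (a⁻¹ * c))⁻¹ := by
      rw [mul_inv_cancel_left]
      exact hS.mp hc
    exact Subgroup.mem_centralizer_singleton_iff.mpr
      (commute_of_map_eq_inv ha (hS.mp hbS) hac).symm
  have htop := subgroup_eq_top_of_card_lt_two_mul_card hcomm hlarge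
  refine Subgroup.mem_center_iff.mpr fun g ↦ ?_
  exact Subgroup.mem_centralizer_singleton_iff.mp (htop ▸ Subgroup.mem_top g)

theorem map_eq_inv_of_three_mul_card_lt {φ : G →* G}
    (hφ : 3 * card G < 4 * #{x | φ x = x⁻¹}) (g : G) : φ g = g⁻¹ := by
  set S : Finset G := {x | φ x = x⁻¹} with hS
  obtain ⟨a, ha, b, hb, rfl⟩ := mem_mul.mp <|
    mem_mul_of_card_lt_card_add_card (show card G < #S + #S by omega) g
  rw [hS, mem_filter_univ] at ha hb
  have hab : Commute a b :=
    (Subgroup.mem_center_iff.mp (mem_center_of_map_eq_inv hφ ha) b).symm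
  rw [map_mul, ha, hb, hab.mul_inv]

end InvertingHom

section SquareNeOne

variable {G : Type*} [Group G]

theorem eq_inv_iff_sq_eq_one {x : G} : x = x⁻¹ ↔ x ^ 2 = 1 := by
  rw [sq, mul_eq_one_iff_eq_inv]

theorem three_le_orderOf_of_sq_ne_one {M : Type*} [Monoid M] {x : M} (hfin : IsOfFinOrder x)
    (hx : x ^ 2 ≠ 1) : 3 ≤ orderOf x := by
  by_contra! hlt
  have hpos := hfin.orderOf_pos
  have hdvd : orderOf x ∣ 2 := by interval_cases orderOf x <;> norm_num
  exact hx (orderOf_dvd_iff_pow_eq_one.mp hdvd)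

variable [Fintype G] [DecidableEq G]

theorem card_le_four_mul_card_sq_ne_one {g : G} (hg : g ^ 2 ≠ 1) :
    card G ≤ 4 * #{x : G | x ^ 2 ≠ 1} := by
  by_contra! hlt
  have hsplit : #{x : G | x ^ 2 = 1} + #{x : G | x ^ 2 ≠ 1} = card G :=
    card_filter_add_card_filter_not _
  have hmany : 3 * card G < 4 * #{x : G | MonoidHom.id G x = x⁻¹} := by
    simp only [MonoidHom.id_apply, eq_inv_iff_sq_eq_one]
    omega
  exact hg (eq_inv_iff_sq_eq_one.mp (map_eq_inv_of_three_mul_card_lt hmany g))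

theorem two_le_card_sq_ne_one {g : G} (hg : g ^ 2 ≠ 1) : 2 ≤ #{x : G | x ^ 2 ≠ 1} := by
  refine one_lt_card.mpr ⟨g, ?_, g⁻¹, ?_, mt eq_inv_iff_sq_eq_one.mp hg⟩
  · exact (mem_filter_univ g).mpr hg
  · rwa [mem_filter_univ, inv_pow, ne_eq, inv_eq_one]

theorem two_mul_card_add_le_sum_orderOf_add_one {m : ℕ}
    (hm : ∀ x : G, x ^ 2 ≠ 1 → 2 + m ≤ orderOf x) :
    2 * card G + m * #{x : G | x ^ 2 ≠ 1} ≤ ∑ x : G, orderOf x + 1 := by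
  have hpoint (x : G) :
      2 + (if x ^ 2 ≠ 1 then m else 0) ≤ orderOf x + if x = 1 then 1 else 0 := by
    by_cases hx : x = 1
    · simp [hx]
    by_cases hsq : x ^ 2 = 1
    · simp [orderOf_eq_prime hsq hx, hsq]
    · simpa [hx, hsq] using hm x hsq
  calc 2 * card G + m * #{x : G | x ^ 2 ≠ 1}
      = ∑ x : G, (2 + if x ^ 2 ≠ 1 then m else 0) := by
        rw [sum_add_distrib, ← sum_filter]
        simp [mul_comm]
    _ ≤ ∑ x : G, (orderOf x + if x = 1 then 1 else 0) := sum_le_sum fun x _ ↦ hpoint x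
    _ = ∑ x : G, orderOf x + 1 := by simp [sum_add_distrib]

end SquareNeOne

section OrderSum

variable {G : Type*} [Group G] [Fintype G]

theorem thirteen_mul_card_le_six_mul_sum_orderOf {g : G} (hg : g ^ 2 ≠ 1) :
    13 * card G ≤ 6 * ∑ x : G, orderOf x := by
  classical
  have hquarter := card_le_four_mul_card_sq_ne_one hg
  have htwo := two_le_card_sq_ne_one hg
  by_cases hdvd : 3 ∣ card G
  · have hsum := two_mul_card_add_le_sum_orderOf_add_one (G := G) (m := 1)
      fun x hx ↦ three_le_orderOf_of_sq_ne_one (isOfFinOrder_of_finite x) hx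
    -- `hquarter` suffices once `|G| ≥ 12`; the orders left are `3`, `6` and `9`.
    omega
  · have hfour (x : G) (hx : x ^ 2 ≠ 1) : 4 ≤ orderOf x := by
      have hne : orderOf x ≠ 3 := fun h ↦ hdvd (h ▸ orderOf_dvd_card)
      have hle := three_le_orderOf_of_sq_ne_one (isOfFinOrder_of_finite x) hx
      omega
    have hsum := two_mul_card_add_le_sum_orderOf_add_one (m := 2) hfour
    omega

theorem thirteen_div_six_le_avgOrder {g : G} (hg : g ^ 2 ≠ 1) : 13 / 6 ≤ avgOrder G := by
  have hcard : (0 : ℚ) < card G := by exact_mod_cast Fintype.card_pos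
  rw [avgOrder, div_le_div_iff₀ (by norm_num) hcard, mul_comm (∑ x : G, _)]
  exact_mod_cast thirteen_mul_card_le_six_mul_sum_orderOf hg

end OrderSum

theorem elementary_abelian_two_of_avgOrder_lt {G : Type*} [Group G] [Fintype G]
    (h : avgOrder G < 13 / 6) : ∀ g : G, g ^ 2 = 1 := by
  by_contra! hne
  obtain ⟨g, hg⟩ := hne
  exact h.not_ge (thirteen_div_six_le_avgOrder hg)
end

section
/- Let G be a nontrivial finite group. Then o(G) ≥ 2 − 1/|G|; moreover o(G) ≤ 2 if and only if G is an elementary abelian 2-group (i.e., every element g satisfies g² = 1), and in that case o(G) = 2 − 1/|G|. -/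
/-!
Only the identity has order below `2`, so `ψ(G) + 1 = 2|G| + E`, where `E` adds up the amounts by
which element orders exceed `2`; equivalently `o(G) = 2 - 1/|G| + E/|G|`. Hence `o(G) ≤ 2` means
`E ≤ 1`. If `g ^ 2 ≠ 1`, then `g` and `g⁻¹` are distinct and each contributes at least `1` to `E`,
so `E ≤ 1` already forces every element to square to `1`, and then `E = 0`.
-/

section Monoid

variable {M : Type*} [Monoid M] {x : M}

lemma orderOf_le_two_iff_sq_eq_one (hx : IsOfFinOrder x) : orderOf x ≤ 2 ↔ x ^ 2 = 1 := by
  refine ⟨fun hle ↦ ?_, orderOf_le_of_pow_eq_one two_pos⟩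
  have hpos : 0 < orderOf x := hx.orderOf_pos
  apply orderOf_dvd_iff_pow_eq_one.mp
  interval_cases orderOf x <;> norm_num

lemma orderOf_add_ite_eq_two_add (hx : IsOfFinOrder x) [Decidable (x = 1)] :
    orderOf x + (if x = 1 then 1 else 0) = 2 + (orderOf x - 2) := by
  have hpos : 0 < orderOf x := hx.orderOf_pos
  have hone : orderOf x = 1 ↔ x = 1 := orderOf_eq_one_iff
  split_ifs <;> grind

end Monoid

/-- The total amount by which the orders of the elements of `G` exceed `2`. The subtraction is
truncated, so the identity contributes `0` rather than `-1`. -/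
noncomputable def orderExcess (G : Type*) [Group G] [Fintype G] : ℕ :=
  ∑ x : G, (orderOf x - 2)

section Group

variable {G : Type*} [Group G] [Fintype G]

lemma sum_orderOf_add_one_eq_two_mul_card_add_orderExcess :
    ∑ x : G, orderOf x + 1 = 2 * Fintype.card G + orderExcess G := by
  classical
  calc
    ∑ x : G, orderOf x + 1 = ∑ x : G, (orderOf x + if x = 1 then 1 else 0) := by
      simp [Finset.sum_add_distrib]
    _ = ∑ x : G, (2 + (orderOf x - 2)) :=
      Finset.sum_congr rfl fun x _ ↦ orderOf_add_ite_eq_two_add (isOfFinOrder_of_finite x)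
    _ = 2 * Fintype.card G + orderExcess G := by
      simp [Finset.sum_add_distrib, orderExcess, mul_comm]

lemma orderExcess_eq_zero_iff : orderExcess G = 0 ↔ ∀ g : G, g ^ 2 = 1 := by
  simp [orderExcess, Nat.sub_eq_zero_iff_le,
    orderOf_le_two_iff_sq_eq_one (isOfFinOrder_of_finite _)]

lemma two_le_orderExcess_of_sq_ne_one {g : G} (hg : g ^ 2 ≠ 1) : 2 ≤ orderExcess G := by
  classical
  have hne : g ≠ g⁻¹ := fun h ↦ hg (by rw [sq, mul_eq_one_iff_eq_inv, ← h])
  have hlt : 2 < orderOf g :=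
    not_le.mp (mt (orderOf_le_two_iff_sq_eq_one (isOfFinOrder_of_finite g)).mp hg)
  calc
    2 ≤ (orderOf g - 2) + (orderOf g⁻¹ - 2) := by
      rw [orderOf_inv]
      omega
    _ = ∑ x ∈ {g, g⁻¹}, (orderOf x - 2) := by rw [Finset.sum_pair hne]
    _ ≤ orderExcess G := Finset.sum_le_sum_of_subset (Finset.subset_univ _)

lemma orderExcess_le_one_iff : orderExcess G ≤ 1 ↔ ∀ g : G, g ^ 2 = 1 := by
  refine ⟨fun hle g ↦ ?_, fun h ↦ (orderExcess_eq_zero_iff.mpr h).trans_le zero_le_one⟩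
  by_contra hg
  exact (two_le_orderExcess_of_sq_ne_one hg).not_gt (Nat.lt_succ_of_le hle)

lemma avgOrder_eq_add_orderExcess_div_card :
    avgOrder G = 2 - 1 / (Fintype.card G : ℚ) + orderExcess G / Fintype.card G := by
  have hsum : ∑ x : G, (orderOf x : ℚ) + 1 = 2 * Fintype.card G + orderExcess G :=
    mod_cast sum_orderOf_add_one_eq_two_mul_card_add_orderExcess (G := G)
  rw [avgOrder, eq_sub_of_add_eq hsum]
  field_simp
  ring

lemma avgOrder_le_two_iff_orderExcess_le_one : avgOrder G ≤ 2 ↔ orderExcess G ≤ 1 := by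
  have hcard : (0 : ℚ) < Fintype.card G := mod_cast Fintype.card_pos
  rw [avgOrder_eq_add_orderExcess_div_card, sub_add, sub_le_self_iff, sub_nonneg,
    div_le_div_iff_of_pos_right hcard, Nat.cast_le_one]

end Group

theorem avgOrder_lower_bound {G : Type*} [Group G] [Fintype G] [Nontrivial G] :
    2 - 1 / (Fintype.card G : ℚ) ≤ avgOrder G ∧
    (avgOrder G ≤ 2 ↔ ∀ g : G, g ^ 2 = 1) ∧
    ((∀ g : G, g ^ 2 = 1) → avgOrder G = 2 - 1 / (Fintype.card G : ℚ)) := by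
  refine ⟨?_, avgOrder_le_two_iff_orderExcess_le_one.trans orderExcess_le_one_iff, fun h ↦ ?_⟩
  · rw [avgOrder_eq_add_orderExcess_div_card]
    exact le_add_of_nonneg_right (by positivity)
  · rw [avgOrder_eq_add_orderExcess_div_card, orderExcess_eq_zero_iff.mpr h, Nat.cast_zero,
      zero_div, add_zero]
end

section
/- Let G be a nontrivial finite group of odd order. Then o(G) ≥ 3 − 2/|G|, and in particular o(G) ≥ 7/3. -/
theorem three_le_minFac_of_odd {n : ℕ} (hn : Odd n) (hn_ne_one : n ≠ 1) : 3 ≤ n.minFac := by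
  have minFac_ne_two : n.minFac ≠ 2 :=
    mt (Nat.minFac_eq_two_iff n).mp hn.not_two_dvd_nat
  have two_le_minFac : 2 ≤ n.minFac := (Nat.minFac_prime hn_ne_one).two_le
  lia

theorem one_add_card_sub_one_mul_le_sum_orderOf {M R : Type*} [Monoid M] [Fintype M]
    [Ring R] [PartialOrder R] [IsOrderedAddMonoid R] {m : R}
    (hm : ∀ x : M, x ≠ 1 → m ≤ orderOf x) :
    1 + ((Fintype.card M : R) - 1) * m ≤ ∑ x : M, (orderOf x : R) := by
  classical
  have card_erase : ((Finset.univ.erase (1 : M)).card : R) = Fintype.card M - 1 := by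
    rw [Finset.cast_card_erase_of_mem (Finset.mem_univ 1), Finset.card_univ]
  calc 1 + ((Fintype.card M : R) - 1) * m
      = orderOf (1 : M) + (Finset.univ.erase (1 : M)).card • m := by
        rw [nsmul_eq_mul, card_erase, orderOf_one, Nat.cast_one]
    _ ≤ orderOf (1 : M) + ∑ x ∈ Finset.univ.erase (1 : M), (orderOf x : R) := by
        gcongr
        exact Finset.card_nsmul_le_sum _ _ _ fun x hx => hm x (Finset.ne_of_mem_erase hx)
    _ = ∑ x : M, (orderOf x : R) :=
        Finset.add_sum_erase _ (fun x : M => (orderOf x : R)) (Finset.mem_univ 1)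

section Group

variable {G : Type*} [Group G] [Fintype G]

theorem minFac_card_le_orderOf {x : G} (hx : x ≠ 1) :
    (Fintype.card G).minFac ≤ orderOf x := by
  have order_ne_one : orderOf x ≠ 1 := mt orderOf_eq_one_iff.mp hx
  have order_pos : 0 < orderOf x := orderOf_pos x
  exact Nat.minFac_le_of_dvd (by lia) orderOf_dvd_card

theorem avgOrder_ge_of_forall_le_orderOf {m : ℚ} (hm : ∀ x : G, x ≠ 1 → m ≤ orderOf x) :
    m - (m - 1) / (Fintype.card G : ℚ) ≤ avgOrder G := by
  have card_pos : (0 : ℚ) < Fintype.card G := mod_cast Fintype.card_pos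
  rw [avgOrder, le_div_iff₀ card_pos, sub_mul, div_mul_cancel₀ _ card_pos.ne']
  linarith [one_add_card_sub_one_mul_le_sum_orderOf hm]

theorem avgOrder_ge_of_odd_order_general {q : ℕ} (hq : 1 ≤ q)
    (h : q ≤ (Fintype.card G).minFac) :
    q - (q - 1) / (Fintype.card G : ℚ) ≤ avgOrder G ∧ q - (q - 1) / (q : ℚ) ≤ avgOrder G := by
  have avg_ge : q - (q - 1) / (Fintype.card G : ℚ) ≤ avgOrder G :=
    avgOrder_ge_of_forall_le_orderOf fun x hx => mod_cast h.trans (minFac_card_le_orderOf hx)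
  have q_le_card : q ≤ Fintype.card G := h.trans (Nat.minFac_le Fintype.card_pos)
  have q_sub_one_nonneg : (0 : ℚ) ≤ q - 1 := sub_nonneg.mpr (mod_cast hq)
  refine ⟨avg_ge, le_trans ?_ avg_ge⟩
  gcongr

end Group

theorem avgOrder_ge_of_odd_order {G : Type*} [Group G] [Fintype G] [Nontrivial G]
    (h : Odd (Fintype.card G)) :
    3 - 2 / (Fintype.card G : ℚ) ≤ avgOrder G ∧ 7 / 3 ≤ avgOrder G := by
  have three_le_minFac := three_le_minFac_of_odd h Fintype.one_lt_card.ne'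
  convert avgOrder_ge_of_odd_order_general (by norm_num) three_le_minFac using 2 <;> norm_num
end

section
/- Let G be a finite group and H a nontrivial normal subgroup of G. Then o(G/H) < o(G). -/
/-!
Averaging a function over `G / H` is the same as averaging its pullback over `G`, because all
cosets of `H` have the same size. Hence `o(G / H)` is the average of the orders `|xH|` over
`x ∈ G`. Each of these is at most `|x|`, and the inequality is strict when `1 ≠ x ∈ H`.
-/

open Finset
open scoped BigOperators

section FiberAverage

variable {G K M : Type*} [Group G] [Fintype G] [Group K] [Fintype K]

theorem sum_comp_monoidHom_of_surjective [AddCommMonoid M] {f : G →* K} (hf : Function.Surjective f)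
    (φ : K → M) : ∑ x, φ (f x) = Nat.card f.ker • ∑ y, φ y := by
  classical
  have card_fiber (y : K) : #{x | f x = y} = Nat.card f.ker := by
    rw [← Nat.card_congr (MonoidHom.fiberEquivKerOfSurjective hf y), ← Fintype.card_subtype,
      ← Nat.card_eq_fintype_card]
    rfl
  calc ∑ x, φ (f x) = ∑ y, ∑ x with f x = y, φ y := (sum_fiberwise' univ f φ).symm
    _ = ∑ y, Nat.card f.ker • φ y := by simp only [sum_const, card_fiber]
    _ = Nat.card f.ker • ∑ y, φ y := (smul_sum ..).symm

theorem expect_comp_monoidHom_of_surjective [AddCommMonoid M] [Module ℚ≥0 M] {f : G →* K}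
    (hf : Function.Surjective f) (φ : K → M) : 𝔼 x, φ (f x) = 𝔼 y, φ y := by
  have card_eq : Fintype.card G = Nat.card f.ker * Fintype.card K := by
    simpa using sum_comp_monoidHom_of_surjective hf fun _ ↦ (1 : ℕ)
  have ker_ne_zero : (Nat.card f.ker : ℚ≥0) ≠ 0 := mod_cast Nat.card_pos.ne'
  rw [expect, expect, sum_comp_monoidHom_of_surjective hf, card_univ, card_univ, card_eq,
    ← Nat.cast_smul_eq_nsmul ℚ≥0, smul_smul, Nat.cast_mul, mul_inv_rev,
    inv_mul_cancel_right₀ ker_ne_zero]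

end FiberAverage

section OrderOfMap

variable {G K : Type*} [Monoid G] [Monoid K] {x : G}

theorem orderOf_map_le (f : G →* K) (hx : IsOfFinOrder x) : orderOf (f x) ≤ orderOf x :=
  Nat.le_of_dvd hx.orderOf_pos (orderOf_map_dvd f x)

theorem orderOf_map_lt_of_map_eq_one {f : G →* K} (hx : IsOfFinOrder x) (hfx : f x = 1)
    (hx1 : x ≠ 1) : orderOf (f x) < orderOf x := by
  rw [hfx, orderOf_one]
  exact lt_of_le_of_ne hx.orderOf_pos (Ne.symm <| mt orderOf_eq_one_iff.mp hx1)

end OrderOfMap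

theorem avgOrder_eq_expect (G : Type*) [Group G] [Fintype G] :
    avgOrder G = 𝔼 x : G, (orderOf x : ℚ) :=
  (Fintype.expect_eq_sum_div_card _).symm

theorem avgOrder_lt_of_surjective_of_ker_ne_bot {G K : Type*} [Group G] [Fintype G] [Group K]
    [Fintype K] {f : G →* K} (hf : Function.Surjective f) (hker : f.ker ≠ ⊥) :
    avgOrder K < avgOrder G := by
  obtain ⟨x, hx, hx1⟩ := f.ker.bot_or_exists_ne_one.resolve_left hker
  calc avgOrder K = 𝔼 y : K, (orderOf y : ℚ) := avgOrder_eq_expect K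
    _ = 𝔼 x : G, (orderOf (f x) : ℚ) := (expect_comp_monoidHom_of_surjective hf _).symm
    _ < 𝔼 x : G, (orderOf x : ℚ) :=
      expect_lt_expect (fun x _ ↦ mod_cast orderOf_map_le f (isOfFinOrder_of_finite x))
        ⟨x, mem_univ x, mod_cast
          orderOf_map_lt_of_map_eq_one (isOfFinOrder_of_finite x) (f.mem_ker.mp hx) hx1⟩
    _ = avgOrder G := (avgOrder_eq_expect G).symm

theorem avgOrder_quotient_lt {G : Type*} [Group G] [Fintype G]
    (H : Subgroup G) [H.Normal] [Fintype (G ⧸ H)] (hH : H ≠ ⊥) :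
    avgOrder (G ⧸ H) < avgOrder G :=
  avgOrder_lt_of_surjective_of_ker_ne_bot (QuotientGroup.mk'_surjective H)
    ((QuotientGroup.ker_mk' H).symm ▸ hH)
end

section
/- Let G be a finite non-solvable group. Then o(G) > 311/100. -/
/-!
In a minimal counterexample `G` every quotient by a nontrivial normal subgroup is solvable, so `G`
has no nontrivial solvable normal subgroup. If `G` is not simple, a minimal normal subgroup `S` is
perfect and satisfies the bound, and the bound spreads to every coset of `S`: element orders in a
coset are multiples of its order in `G ⧸ S`, and a coset of order two (three) cannot consist too
largely of elements of order two (three).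

For `G` simple, an element of order less than four is a solution of `x ^ 2 = 1` or `x ^ 3 = 1`, and
both kinds have to be bounded. If `R` is a `p`-subgroup, two solutions of `x ^ 2 = 1` in one coset
`zR` make `R` meet `z⁻¹Rz` nontrivially, so cosets outside the normalizer contain few. If `g` has
order three, both counts are controlled along the cosets of `⟨g⟩` by the centralizer of `g`. Which
estimate suffices depends on the power of three dividing the order of `G`.
-/

open Finset
open scoped Classical

/-! ### Solvability and small permutation groups -/

theorem isSolvable_alternatingGroup_fin_four : Group.IsSolvable (alternatingGroup (Fin 4)) := by
  have h4 : Nat.card (Fin 4) = 4 := Nat.card_fin 4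
  have := alternatingGroup.kleinFour_isKleinFour h4
  have hV : Group.IsSolvable (commutator (alternatingGroup (Fin 4))) := by
    rw [← alternatingGroup.kleinFour_eq_commutator h4]
    exact Group.isSolvable_of_comm (mul_comm_of_exponent_two IsKleinFour.exponent_two)
  have hq : Group.IsSolvable (Abelianization (alternatingGroup (Fin 4))) := inferInstance
  exact (Group.isSolvable_iff_subgroup_quotient (commutator _)).2 ⟨hV, hq⟩

theorem isSolvable_perm_of_card_le_four {α : Type*} [Finite α] (h : Nat.card α ≤ 4) :
    Group.IsSolvable (Equiv.Perm α) := by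
  have := isSolvable_alternatingGroup_fin_four
  have : Group.IsSolvable (Equiv.Perm (Fin 4)) :=
    Group.isSolvable_of_ker_le_range (alternatingGroup (Fin 4)).subtype Equiv.Perm.sign
      (by rw [Subgroup.range_subtype]; exact le_rfl)
  let ι : α ↪ Fin 4 := (Finite.equivFin α).toEmbedding.trans (Fin.castLEEmb h)
  exact Group.isSolvable_of_isSolvable_injective (Equiv.Perm.viaEmbeddingHom_injective ι)

theorem isSolvable_of_isPGroup {p : ℕ} [Fact p.Prime] {G : Type*} [Group G] [Finite G]
    (hG : IsPGroup p G) : Group.IsSolvable G :=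
  have := hG.isNilpotent
  inferInstance

theorem monoidHom_eq_one_of_perfect {G H : Type*} [Group G] [Group H] [Group.IsSolvable H]
    (hG : commutator G = ⊤) (f : G →* H) : f = 1 := by
  by_contra hf
  have hrange : f.range ≠ ⊥ := fun h => hf (MonoidHom.range_eq_bot_iff.1 h)
  have := (Subgroup.nontrivial_iff_ne_bot _).2 hrange
  have hmap : (⊤ : Subgroup G).map f.rangeRestrict = ⊤ :=
    Subgroup.map_top_of_surjective _ f.rangeRestrict_surjective
  have hperf : commutator f.range = ⊤ := by
    rw [commutator_def, ← hmap, ← Subgroup.map_commutator, ← commutator_def, hG]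
  exact (Group.IsSolvable.commutator_lt_top_of_nontrivial f.range).ne hperf

theorem card_sylow_ne_four_of_perfect {p : ℕ} [Fact p.Prime] {G : Type*} [Group G] [Finite G]
    (hG : commutator G = ⊤) : Nat.card (Sylow p G) ≠ 4 := by
  intro h4
  have := isSolvable_perm_of_card_le_four h4.le
  have htriv := monoidHom_eq_one_of_perfect hG (MulAction.toPermHom G (Sylow p G))
  have hfix (x : G) (P : Sylow p G) : x • P = P :=
    Equiv.congr_fun (DFunLike.congr_fun htriv x) P
  have : Subsingleton (Sylow p G) := ⟨fun P Q => by
    obtain ⟨x, rfl⟩ := MulAction.exists_smul_eq G P Q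
    exact (hfix x P).symm⟩
  have := Finite.card_le_one_iff_subsingleton.2 this
  omega

theorem isSolvable_sup {G : Type*} [Group G] {M N : Subgroup G} [N.Normal]
    (hM : Group.IsSolvable M) (hN : Group.IsSolvable N) :
    Group.IsSolvable (M ⊔ N : Subgroup G) := by
  rw [Group.isSolvable_iff_subgroup_quotient (N.subgroupOf (M ⊔ N))]
  exact ⟨Group.isSolvable_of_isSolvable_injective
      (f := (Subgroup.subgroupOfEquivOfLe (le_sup_right : N ≤ M ⊔ N)).toMonoidHom)
      (Subgroup.subgroupOfEquivOfLe le_sup_right).injective,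
    Group.isSolvable_of_surjective
      (f := (QuotientGroup.quotientInfEquivProdNormalQuotient M N).toMonoidHom)
      (QuotientGroup.quotientInfEquivProdNormalQuotient M N).surjective⟩

theorem exists_characteristic_isSolvable_forall_le (G : Type*) [Group G] [Finite G] :
    ∃ M : Subgroup G, M.Characteristic ∧ Group.IsSolvable M ∧
      ∀ N : Subgroup G, N.Normal → Group.IsSolvable N → N ≤ M := by
  obtain ⟨M, ⟨hM, hMsol⟩, hmax⟩ :=
    {N : Subgroup G | N.Normal ∧ Group.IsSolvable N}.toFinite.exists_maximal
      ⟨⊥, inferInstance, inferInstance⟩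
  have hle (N : Subgroup G) (hN : N.Normal) (hNsol : Group.IsSolvable N) : N ≤ M :=
    le_sup_left.trans (hmax ⟨inferInstance, isSolvable_sup hNsol hMsol⟩ le_sup_right)
  refine ⟨M, Subgroup.characteristic_iff_map_le.2 fun φ => hle _ ?_ ?_, hMsol, hle⟩
  · exact hM.map _ φ.surjective
  · exact Group.isSolvable_of_surjective (φ.toMonoidHom.subgroupMap_surjective M)

/-! ### Groups without solvable normal subgroups -/

/-- The solvable radical of `G` is trivial: no normal subgroup except `⊥` is solvable. -/
def SolvableRadicalTrivial (G : Type*) [Group G] : Prop :=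
  ∀ N : Subgroup G, N.Normal → Group.IsSolvable N → N = ⊥

namespace SolvableRadicalTrivial

variable {G : Type*} [Group G]

theorem of_isSimpleGroup [IsSimpleGroup G] (hG : ¬ Group.IsSolvable G) :
    SolvableRadicalTrivial G := by
  intro N hN hsol
  refine hN.eq_bot_or_eq_top.resolve_right ?_
  rintro rfl
  exact hG (Group.isSolvable_of_surjective (f := (⊤ : Subgroup G).subtype)
    fun x => ⟨⟨x, Subgroup.mem_top x⟩, rfl⟩)

theorem center_eq_bot (hG : SolvableRadicalTrivial G) : Subgroup.center G = ⊥ :=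
  hG _ inferInstance (Group.isSolvable_of_comm fun a b => Subtype.ext (b.2.comm a).symm)

theorem eq_one_of_forall_commute (hG : SolvableRadicalTrivial G) {g : G}
    (hg : ∀ x, Commute x g) : g = 1 := by
  have hmem : g ∈ Subgroup.center G := Subgroup.mem_center_iff.2 hg
  rwa [hG.center_eq_bot, Subgroup.mem_bot] at hmem

theorem add_one_le_card_sylow [Finite G] (hG : SolvableRadicalTrivial G) {p : ℕ} [Fact p.Prime]
    (hp : p ∣ Nat.card G) : p + 1 ≤ Nat.card (Sylow p G) := by
  have hne : Nat.card (Sylow p G) ≠ 1 := by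
    intro h
    have : Subsingleton (Sylow p G) := (Nat.card_eq_one_iff_unique.1 h).1
    let P : Sylow p G := default
    exact P.ne_bot_of_dvd_card hp
      (hG P (Sylow.normal_of_subsingleton P) (isSolvable_of_isPGroup P.isPGroup'))
  have hpos : 0 < Nat.card (Sylow p G) := Nat.card_pos
  have hdvd := (Nat.modEq_iff_dvd' hpos).1 (card_sylow_modEq_one p G).symm
  have := Nat.le_of_dvd (by omega) hdvd
  omega

theorem of_normal [Finite G]
    (hG : SolvableRadicalTrivial G) (S : Subgroup G) [S.Normal] : SolvableRadicalTrivial S := by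
  obtain ⟨M, hM, hMsol, hle⟩ := exists_characteristic_isSolvable_forall_le S
  have hmap : M.map S.subtype = ⊥ := hG _ inferInstance <|
    Group.isSolvable_of_surjective (S.subtype.subgroupMap_surjective M)
  rw [Subgroup.map_eq_bot_iff_of_injective _ S.subtype_injective] at hmap
  exact fun N hN hNsol => le_bot_iff.1 (hmap ▸ hle N hN hNsol)

theorem eq_one_of_forall_commute_conj (hG : SolvableRadicalTrivial G) {g : G}
    (hg : ∀ u, Commute g (u * g * u⁻¹)) : g = 1 := by
  have hcomm : IsMulCommutative (Subgroup.normalClosure {g}) := by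
    refine Subgroup.isMulCommutative_closure fun x hx y hy => ?_
    simp only [Group.mem_conjugatesOfSet_iff, Set.mem_singleton_iff, exists_eq_left,
      isConj_iff] at hx hy
    obtain ⟨u, rfl⟩ := hx
    obtain ⟨v, rfl⟩ := hy
    have h := (Commute.conj_iff u).2 (hg (u⁻¹ * v))
    have hv : u * (u⁻¹ * v * g * (u⁻¹ * v)⁻¹) * u⁻¹ = v * g * v⁻¹ := by group
    rwa [hv] at h
  have hbot := hG _ inferInstance (Group.isSolvable_of_comm hcomm.is_comm.comm)
  simpa using Subgroup.normalClosure_eq_bot_iff.1 hbot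

end SolvableRadicalTrivial

/-! ### Finite simple groups -/

section Simple

variable {G : Type*} [Group G] [IsSimpleGroup G]

theorem toPermHom_quotient_injective {H : Subgroup G} (hH : H ≠ ⊤) :
    Function.Injective (MulAction.toPermHom G (G ⧸ H)) := by
  rw [← MonoidHom.ker_eq_bot_iff, ← Subgroup.normalCore_eq_ker]
  refine (Subgroup.Normal.eq_bot_or_eq_top inferInstance).resolve_right fun h => ?_
  exact hH (top_le_iff.1 (h ▸ H.normalCore_le))

variable [Finite G]

theorem card_dvd_factorial_index {H : Subgroup G} (hH : H ≠ ⊤) :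
    Nat.card G ∣ H.index.factorial := by
  have h := Subgroup.card_dvd_of_injective _ (toPermHom_quotient_injective hH)
  rwa [Nat.card_perm] at h

theorem five_le_index (hG : ¬ Group.IsSolvable G) {H : Subgroup G} (hH : H ≠ ⊤) :
    5 ≤ H.index := by
  by_contra! h
  have := isSolvable_perm_of_card_le_four (α := G ⧸ H) (Nat.lt_succ_iff.1 h)
  exact hG (Group.isSolvable_of_isSolvable_injective (toPermHom_quotient_injective hH))

theorem sylow_ne_top (hG : ¬ Group.IsSolvable G) {p : ℕ} [Fact p.Prime] (P : Sylow p G) :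
    (P : Subgroup G) ≠ ⊤ := fun h =>
  top_ne_bot <| SolvableRadicalTrivial.of_isSimpleGroup hG ⊤ inferInstance <|
    h ▸ isSolvable_of_isPGroup P.isPGroup'

theorem not_normalizer_le_centralizer_sylow (hG : ¬ Group.IsSolvable G) {p : ℕ} [Fact p.Prime]
    (hp : p ∣ Nat.card G) (P : Sylow p G) :
    ¬ Subgroup.normalizer (P : Set G) ≤ Subgroup.centralizer (P : Set G) := by
  intro h
  have hcompl := MonoidHom.ker_transferSylow_isComplement' P h
  rcases Subgroup.Normal.eq_bot_or_eq_top
    (inferInstance : (MonoidHom.transferSylow P h).ker.Normal) with hker | hker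
  · rw [hker, Subgroup.isComplement'_bot_left] at hcompl
    exact sylow_ne_top hG P hcompl
  · rw [hker, Subgroup.isComplement'_top_left] at hcompl
    exact P.ne_bot_of_dvd_card hp hcompl

theorem exists_prime_ge_five_dvd_card (hG : ¬ Group.IsSolvable G) (h9 : ¬ 9 ∣ Nat.card G) :
    ∃ p, p.Prime ∧ 5 ≤ p ∧ p ∣ Nat.card G := by
  by_contra! hp
  let P : Sylow 2 G := default
  have hodd : ¬ 2 ∣ (P : Subgroup G).index := P.not_dvd_index
  have hdvd : (P : Subgroup G).index ∣ Nat.card G := Subgroup.index_dvd_card _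
  have hthree : ∀ {q : ℕ}, q.Prime → q ∣ (P : Subgroup G).index → q = 3 := by
    intro q hq hqP
    have hlt : q < 5 := lt_of_not_ge fun h5 => hp q hq h5 (hqP.trans hdvd)
    interval_cases q <;> first | rfl | exact absurd hqP hodd | exact absurd hq (by decide)
  have hpow := Nat.eq_prime_pow_of_unique_prime_dvd Subgroup.index_ne_zero_of_finite hthree
  have hlen : (P : Subgroup G).index.primeFactorsList.length < 2 := by
    by_contra! h2
    exact h9 ((pow_dvd_pow 3 h2).trans (hpow ▸ hdvd))
  have hle := Nat.pow_le_pow_right (by norm_num : 0 < 3) (Nat.lt_succ_iff.1 hlen)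
  have := five_le_index hG (sylow_ne_top hG P)
  omega

end Simple

/-! ### Counting solutions of `x ^ 2 = 1` in cosets -/

section Involutions

variable {G : Type*} [Group G]

theorem card_filter_mem_subgroup [Fintype G] (H : Subgroup G) : #{x : G | x ∈ H} = Nat.card H := by
  rw [Nat.card_eq_fintype_card, Fintype.card_subtype]

theorem card_filter_mk_eq [Fintype G] (H : Subgroup G) (q : G ⧸ H) :
    #{x : G | (x : G ⧸ H) = q} = Nat.card H := by
  obtain ⟨y, rfl⟩ := QuotientGroup.mk_surjective q
  rw [← card_filter_mem_subgroup]
  refine card_bij (fun x _ => y⁻¹ * x) ?_ (by simp) fun h hh => ⟨y * h, ?_, by simp⟩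
  · intro x hx
    simpa [eq_comm, QuotientGroup.eq] using hx
  · simpa [eq_comm (b := (y : G ⧸ H)), QuotientGroup.eq] using hh

theorem card_filter_mk_eq_inter_le [Fintype G] (S N : Subgroup G) (q : G ⧸ S) :
    #{x : G | (x : G ⧸ S) = q ∧ x ∈ N} ≤ Nat.card (S ⊓ N : Subgroup G) := by
  obtain hempty | ⟨y, hy⟩ := ({x : G | (x : G ⧸ S) = q ∧ x ∈ N} : Finset G).eq_empty_or_nonempty
  · simp [hempty]
  obtain ⟨rfl, hyN⟩ := (mem_filter_univ _).1 hy
  rw [← card_filter_mem_subgroup]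
  refine card_le_card_of_injOn (fun x => y⁻¹ * x) (fun x hx => ?_) (by simp)
  obtain ⟨hxS, hxN⟩ := (mem_filter_univ _).1 hx
  exact (mem_filter_univ _).2
    ⟨QuotientGroup.eq.1 hxS.symm, N.mul_mem (N.inv_mem hyN) hxN⟩

theorem prime_mul_card_le_card_of_lt [Finite G] {p : ℕ} [Fact p.Prime] {K R : Subgroup G}
    (hR : IsPGroup p R) (hKR : K < R) : p * Nat.card K ≤ Nat.card R := by
  obtain ⟨n, hn⟩ := hR.index (K.subgroupOf R)
  have hn0 : n ≠ 0 := by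
    rintro rfl
    exact hKR.not_ge (Subgroup.relIndex_eq_one.1 (hn.trans (pow_zero p)))
  have hcard := Subgroup.relIndex_mul_relIndex ⊥ K R bot_le hKR.le
  rw [Subgroup.relIndex_bot_left, Subgroup.relIndex_bot_left, Subgroup.relIndex, hn] at hcard
  rw [← hcard, mul_comm]
  exact Nat.mul_le_mul_left _ (Nat.le_self_pow hn0 p)

-- Two solutions `z` and `zk` in the same coset force `z k z⁻¹ = k⁻¹`, so `k` lies in `R ∩ z⁻¹Rz`.
theorem prime_mul_card_involutions_coset_le [Fintype G] {p : ℕ} [Fact p.Prime] {R : Subgroup G}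
    (hR : IsPGroup p R) {x : G} (hx : x ∉ Subgroup.normalizer (R : Set G)) :
    p * #{z : G | (z : G ⧸ R) = x ∧ z ^ 2 = 1} ≤ Nat.card R := by
  obtain hempty | ⟨z, hz⟩ :=
    ({z : G | (z : G ⧸ R) = x ∧ z ^ 2 = 1} : Finset G).eq_empty_or_nonempty
  · simp [hempty]
  obtain ⟨hzx, hz2⟩ := (mem_filter_univ _).1 hz
  let K : Subgroup G := R ⊓ R.comap (MulAut.conj z).toMonoidHom
  have hK : K < R := by
    refine inf_le_left.lt_of_ne fun h => hx ?_
    have hzN : z ∈ Subgroup.normalizer (R : Set G) :=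
      Subgroup.mem_normalizer_fintype fun k hk => (h.ge hk).2
    have := mul_mem hzN (Subgroup.le_normalizer (QuotientGroup.eq.1 hzx))
    rwa [mul_inv_cancel_left] at this
  refine le_trans (Nat.mul_le_mul_left p ?_) (prime_mul_card_le_card_of_lt hR hK)
  rw [← card_filter_mem_subgroup]
  refine card_le_card_of_injOn (fun w => z⁻¹ * w) (fun w hw => ?_) (by simp)
  obtain ⟨hwx, hw2⟩ := (mem_filter_univ _).1 hw
  have hk : z⁻¹ * w ∈ R := QuotientGroup.eq.1 (hzx.trans hwx.symm)
  have hconj : z * (z⁻¹ * w) * z⁻¹ = (z⁻¹ * w)⁻¹ := by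
    rw [sq, ← eq_inv_iff_mul_eq_one] at hz2 hw2
    rw [mul_inv_cancel_left, mul_inv_rev, inv_inv, ← hz2, ← hw2]
  exact (mem_filter_univ _).2 ⟨hk, (hconj ▸ R.inv_mem hk : z * (z⁻¹ * w) * z⁻¹ ∈ R)⟩

theorem prime_mul_card_involutions_le [Finite G] {p : ℕ} [Fact p.Prime] {R : Subgroup G}
    (hR : IsPGroup p R) {A : Finset G} (hA : ∀ a ∈ A, ∀ r ∈ R, a * r ∈ A) :
    p * #{x ∈ A | x ^ 2 = 1} ≤ p * #{x ∈ A | x ∈ Subgroup.normalizer (R : Set G)} + #A := by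
  have := Fintype.ofFinite G
  rw [card_eq_sum_card_fiberwise (f := QuotientGroup.mk (s := R)) (t := univ) (by simp),
    card_eq_sum_card_fiberwise (f := QuotientGroup.mk (s := R)) (t := univ) (by simp),
    card_eq_sum_card_fiberwise (s := A) (f := QuotientGroup.mk (s := R)) (t := univ) (by simp),
    mul_sum, mul_sum, ← sum_add_distrib]
  refine sum_le_sum fun q _ => ?_
  simp only [filter_filter]
  obtain hempty | ⟨a, haA, rfl⟩ : (∀ a ∈ A, QuotientGroup.mk (s := R) a ≠ q) ∨
      ∃ a ∈ A, QuotientGroup.mk a = q := by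
    by_cases h : ∃ a ∈ A, QuotientGroup.mk (s := R) a = q
    · exact .inr h
    · exact .inl (by simpa using h)
  · rw [filter_false_of_mem fun a ha h => hempty a ha h.2, card_empty, mul_zero]
    exact Nat.zero_le _
  by_cases haN : a ∈ Subgroup.normalizer (R : Set G)
  · refine le_add_right (Nat.mul_le_mul_left p (card_le_card ?_))
    refine monotone_filter_right A fun x _ hx => ⟨?_, hx.2⟩
    have := mul_mem haN (Subgroup.le_normalizer (QuotientGroup.eq.1 hx.2.symm))
    rwa [mul_inv_cancel_left] at this
  · have hcoset : {x ∈ A | QuotientGroup.mk (s := R) x = a} =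
        ({x | (x : G ⧸ R) = a} : Finset G) := by
      ext x
      simp only [mem_filter, mem_univ, true_and, and_iff_right_iff_imp]
      intro hx
      simpa using hA a haA _ (QuotientGroup.eq.1 hx.symm)
    rw [hcoset, card_filter_mk_eq]
    refine le_add_left (le_trans (Nat.mul_le_mul_left p (card_le_card fun x hx => ?_))
      (prime_mul_card_involutions_coset_le hR haN))
    simp_all

theorem mul_card_involutions_coset_le [Fintype G] {p n : ℕ} [Fact p.Prime] {R S : Subgroup G}
    (hR : IsPGroup p R) (hRS : R ≤ S)
    (hn : n * Nat.card (S ⊓ Subgroup.normalizer (R : Set G) : Subgroup G) ≤ Nat.card S)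
    (q : G ⧸ S) :
    p * n * #{x : G | (x : G ⧸ S) = q ∧ x ^ 2 = 1} ≤ (p + n) * Nat.card S := by
  have hA : ∀ a ∈ ({x : G | (x : G ⧸ S) = q} : Finset G), ∀ r ∈ R,
      a * r ∈ ({x : G | (x : G ⧸ S) = q} : Finset G) := fun a ha r hr => by
    rw [mem_filter_univ] at ha ⊢
    rw [QuotientGroup.mk_mul_of_mem a (hRS hr), ha]
  have hinv := prime_mul_card_involutions_le hR hA
  rw [filter_filter, filter_filter, card_filter_mk_eq] at hinv
  have hN := card_filter_mk_eq_inter_le S (Subgroup.normalizer (R : Set G)) q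
  nlinarith [Nat.mul_le_mul_left n hinv, Nat.mul_le_mul_left (n * p) hN,
    Nat.mul_le_mul_left p hn]

theorem thirty_mul_card_involutions_le [Fintype G] (hG : SolvableRadicalTrivial G) {p : ℕ}
    [Fact p.Prime] (h5 : 5 ≤ p) (hp : p ∣ Nat.card G) :
    30 * #{x : G | x ^ 2 = 1} ≤ 11 * Nat.card G := by
  let P : Sylow p G := default
  have hn : 6 * Nat.card ((⊤ : Subgroup G) ⊓ Subgroup.normalizer (P : Set G) : Subgroup G) ≤
      Nat.card (⊤ : Subgroup G) := by
    rw [top_inf_eq, Subgroup.card_top,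
      ← Subgroup.card_mul_index (Subgroup.normalizer (P : Set G)), mul_comm]
    refine Nat.mul_le_mul_left _ ?_
    have := hG.add_one_le_card_sylow hp
    rw [P.card_eq_index_normalizer] at this
    exact le_trans (by omega) this
  have h := mul_card_involutions_coset_le P.isPGroup' le_top hn ((1 : G) : G ⧸ (⊤ : Subgroup G))
  have := QuotientGroup.subsingleton_quotient_top (G := G)
  simp only [Subgroup.card_top, Subsingleton.elim _ ((1 : G) : G ⧸ (⊤ : Subgroup G)),
    true_and] at h
  refine Nat.le_of_mul_le_mul_left ?_ (by omega : 0 < p)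
  nlinarith [Nat.mul_le_mul_right (Nat.card G) h5]

end Involutions

/-! ### Element orders and the counts of square and cube roots of one -/

section OrderSum

variable {G : Type*} [Group G]

theorem four_le_orderOf_add [Finite G] (x : G) :
    4 ≤ orderOf x + 2 * (if x ^ 2 = 1 then 1 else 0) + (if x ^ 3 = 1 then 1 else 0) := by
  obtain h | h := le_or_gt 4 (orderOf x)
  · omega
  have hpos := orderOf_pos x
  simp only [← orderOf_dvd_iff_pow_eq_one]
  interval_cases orderOf x <;> norm_num

variable [Fintype G]

theorem four_mul_card_add_le (A : Finset G) {k : ℕ} (hA : ∀ a ∈ A, 4 + k ≤ orderOf a) :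
    4 * Nat.card G + k * #A ≤
      ∑ x : G, orderOf x + 2 * #{x : G | x ^ 2 = 1} + #{x : G | x ^ 3 = 1} := by
  have hpoint (x : G) : 4 + (if x ∈ A then k else 0) ≤
      orderOf x + 2 * (if x ^ 2 = 1 then 1 else 0) + (if x ^ 3 = 1 then 1 else 0) := by
    have := four_le_orderOf_add x
    by_cases hx : x ∈ A
    · have := hA x hx
      simp only [hx, if_true]
      omega
    · simpa only [hx, if_false] using this
  have h := sum_le_sum fun x (_ : x ∈ univ) => hpoint x
  simp only [sum_add_distrib, ← mul_sum, ← card_filter, sum_ite_mem, univ_inter, sum_const,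
    smul_eq_mul, card_univ] at h
  rw [Nat.card_eq_fintype_card]
  linarith

theorem four_mul_card_lt {p : ℕ} (hp : p.Prime) (h5 : 5 ≤ p) (hpG : p ∣ Nat.card G) :
    4 * Nat.card G <
      ∑ x : G, orderOf x + 2 * #{x : G | x ^ 2 = 1} + #{x : G | x ^ 3 = 1} := by
  have := Fact.mk hp
  obtain ⟨x, hx⟩ := exists_prime_orderOf_dvd_card' p hpG
  have := four_mul_card_add_le {x} (k := 1) (by simp [hx, h5])
  rw [card_singleton] at this
  omega

end OrderSum

/-! ### Fixed points and conjugacy classes -/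

section FixedPoints

theorem card_modEq_card_filter_fixed {α : Type*} {p : ℕ} [Fact p.Prime] {f : α → α} {A : Finset α}
    (hA : ∀ a ∈ A, f a ∈ A) (hf : ∀ a ∈ A, f^[p] a = a) : #A ≡ #{a ∈ A | f a = a} [MOD p] := by
  let F : Function.End A := fun a => ⟨f a, hA a a.2⟩
  have hcoe (n : ℕ) (a : A) : ((F ^ n) a : α) = f^[n] a := by
    induction n with
    | zero => rfl
    | succ n ih =>
      rw [pow_succ', Function.iterate_succ_apply', ← ih]
      rfl
  have hF : F ^ p ^ 1 = 1 := funext fun a => Subtype.ext (by rw [pow_one, hcoe, hf a a.2]; rfl)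
  have h := Equiv.Perm.card_fixedPoints_modEq hF
  rw [Fintype.card_coe] at h
  refine h.trans (congrArg (· % p) ?_)
  rw [← Fintype.card_coe]
  exact Fintype.card_congr
    { toFun a := ⟨a.1, mem_filter.2 ⟨a.1.2, congrArg Subtype.val a.2⟩⟩
      invFun a := ⟨⟨a, (mem_filter.1 a.2).1⟩, Subtype.ext (mem_filter.1 a.2).2⟩ }

theorem card_modEq_card_filter_commute {G : Type*} [Group G] {p : ℕ} [Fact p.Prime] {x : G}
    (hx : x ^ p = 1) {A : Finset G} (hA : ∀ a ∈ A, x * a * x⁻¹ ∈ A) :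
    #A ≡ #{a ∈ A | Commute x a} [MOD p] := by
  have hiter (n : ℕ) (a : G) : (fun a => x * a * x⁻¹)^[n] a = x ^ n * a * (x ^ n)⁻¹ := by
    induction n with
    | zero => simp
    | succ n ih => rw [Function.iterate_succ_apply', ih]; group
  refine (card_modEq_card_filter_fixed (p := p) hA fun a _ => by simp [hiter, hx]).trans ?_
  simp only [mul_inv_eq_iff_eq_mul]
  rfl

end FixedPoints

section ConjugacyClass

variable {G : Type*} [Group G] [Fintype G]

theorem sum_conj (g : G) (f : G → ℕ) :
    ∑ x : G, f (x * g * x⁻¹) =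
      Nat.card (Subgroup.centralizer {g}) * ∑ y with IsConj g y, f y := by
  rw [← sum_fiberwise_of_maps_to (t := {y | IsConj g y}) (g := fun x => x * g * x⁻¹)
    (fun x _ => (mem_filter_univ _).2 (isConj_iff.2 ⟨x, rfl⟩)), mul_sum]
  refine sum_congr rfl fun y hy => ?_
  obtain ⟨c, rfl⟩ := isConj_iff.1 ((mem_filter_univ _).1 hy)
  have hfiber : #{x : G | x * g * x⁻¹ = c * g * c⁻¹} = Nat.card (Subgroup.centralizer {g}) := by
    rw [← card_filter_mk_eq _ (c : G ⧸ Subgroup.centralizer {g})]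
    congr 1
    ext x
    rw [mem_filter_univ, mem_filter_univ, eq_comm (b := (c : G ⧸ Subgroup.centralizer {g})),
      QuotientGroup.eq, Subgroup.mem_centralizer_singleton_iff, mul_inv_eq_iff_eq_mul,
      mul_assoc c⁻¹, inv_mul_eq_iff_eq_mul]
    simp only [mul_assoc]
  rw [sum_congr rfl fun x hx => congrArg f (mem_filter.1 hx).2, sum_const, hfiber, smul_eq_mul]

theorem card_isConj (g : G) : #{y | IsConj g y} = (Subgroup.centralizer {g}).index := by
  have h := sum_conj g fun _ => 1
  simp only [sum_const, smul_eq_mul, mul_one, card_univ, ← Nat.card_eq_fintype_card,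
    ← Subgroup.card_mul_index (Subgroup.centralizer {g})] at h
  exact (Nat.eq_of_mul_eq_mul_left Nat.card_pos h).symm

end ConjugacyClass

/-! ### Elements of order three conjugate to their inverse -/

section Inverted

theorem exists_map_eq_inv_of_sq_eq_one {A : Type*} [Group A] [IsMulCommutative A] {φ : MulAut A}
    (hφ : φ ^ 2 = 1) (hne : φ ≠ 1) : ∃ u, u ≠ 1 ∧ φ u = u⁻¹ := by
  obtain ⟨a, ha⟩ : ∃ a, φ a ≠ a := by
    by_contra! h
    exact hne (MulEquiv.ext h)
  have hφφ : φ (φ a) = a := by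
    rw [sq] at hφ
    exact DFunLike.congr_fun hφ a
  refine ⟨a⁻¹ * φ a, fun h => ha (inv_mul_eq_one.1 h).symm, ?_⟩
  rw [map_mul, map_inv, hφφ, mul_inv_rev, inv_inv]

theorem eq_two_of_orderOf_mulAut {A : Type*} [Group A] [Finite A]
    (hA : Nat.card A = 3 ∨ Nat.card A = 9) {φ : MulAut A} {p : ℕ} (hp : p.Prime) (hp3 : p ≠ 3)
    (hφ : orderOf φ = p) : p = 2 := by
  have := Fact.mk hp
  have := Fintype.ofFinite A
  let F : Subgroup A := φ.toMonoidHom.eqLocus (MonoidHom.id A)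
  have hiter (n : ℕ) (a : A) : φ^[n] a = (φ ^ n) a := by
    induction n with
    | zero => rfl
    | succ n ih => rw [Function.iterate_succ_apply', ih, pow_succ']; rfl
  have hmod : Nat.card A ≡ Nat.card F [MOD p] := by
    have h := card_modEq_card_filter_fixed (A := univ) (p := p) (f := φ) (by simp)
      fun a _ => by rw [hiter, ← hφ, pow_orderOf_eq_one]; rfl
    rwa [card_univ, ← Nat.card_eq_fintype_card, show #{a | φ a = a} = Nat.card F from
      card_filter_mem_subgroup F] at h
  have hlt : Nat.card F < Nat.card A := by
    refine lt_of_le_of_ne (Subgroup.card_le_card_group F) fun h => ?_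
    have hφ1 : φ = 1 :=
      MulEquiv.ext fun a => (Subgroup.eq_top_of_card_eq F h).ge (Subgroup.mem_top a)
    exact hp.one_lt.ne (by rw [← hφ, hφ1, orderOf_one])
  have hdvd : p ∣ Nat.card A - Nat.card F := (Nat.modEq_iff_dvd' hlt.le).1 hmod.symm
  have hF : Nat.card F ∣ Nat.card A := Subgroup.card_subgroup_dvd_card F
  have h2 : p ∣ 2 ∨ p ∣ 3 := by
    obtain h | h := hA <;> rw [h] at hF hlt hdvd
    · obtain hF | hF := (Nat.dvd_prime Nat.prime_three).1 hF <;> rw [hF] at hdvd hlt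
      · exact .inl hdvd
      · omega
    · obtain ⟨k, hk, hF⟩ := (Nat.dvd_prime_pow Nat.prime_three (m := 2)).1 hF
      rw [hF] at hdvd hlt
      interval_cases k
      · exact .inl (hp.dvd_of_dvd_pow (show p ∣ 2 ^ 3 from hdvd))
      · exact hp.dvd_mul.1 (show p ∣ 2 * 3 from hdvd)
      · omega
  obtain h | h := h2
  · exact (Nat.prime_dvd_prime_iff_eq hp Nat.prime_two).1 h
  · exact absurd ((Nat.prime_dvd_prime_iff_eq hp Nat.prime_three).1 h) hp3

theorem isMulCommutative_of_card_eq_three_or_nine {A : Type*} [Group A]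
    (hA : Nat.card A = 3 ∨ Nat.card A = 9) : IsMulCommutative A := by
  obtain h | h := hA
  · have := isCyclic_of_prime_card h
    infer_instance
  · exact IsPGroup.isMulCommutative_of_card_eq_prime_sq (p := 3) h

variable {G : Type*} [Group G] [Finite G]

theorem card_sylow_three_eq (h3 : 3 ∣ Nat.card G) (h27 : ¬ 27 ∣ Nat.card G) (P : Sylow 3 G) :
    Nat.card P = 3 ∨ Nat.card P = 9 := by
  obtain ⟨k, hk⟩ := IsPGroup.iff_card.1 P.isPGroup'
  have hdvd : 3 ∣ Nat.card P := P.dvd_card_of_dvd_card h3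
  have hPG : Nat.card P ∣ Nat.card G := Subgroup.card_subgroup_dvd_card _
  rw [hk] at hdvd hPG ⊢
  obtain _ | _ | _ | k := k
  · norm_num at hdvd
  · exact .inl rfl
  · exact .inr rfl
  · exact absurd ((pow_dvd_pow 3 (by omega : 3 ≤ k + 1 + 1 + 1)).trans hPG) h27

-- Burnside's transfer theorem provides an automorphism of prime order induced on the abelian
-- Sylow subgroup; counting its fixed points shows that it is an involution.
theorem exists_orderOf_eq_three_isConj_inv [IsSimpleGroup G] (hG : ¬ Group.IsSolvable G)
    (h3 : 3 ∣ Nat.card G) (h27 : ¬ 27 ∣ Nat.card G) (P : Sylow 3 G) :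
    ∃ g ∈ P, orderOf g = 3 ∧ IsConj g g⁻¹ := by
  have hP := card_sylow_three_eq h3 h27 P
  have := isMulCommutative_of_card_eq_three_or_nine hP
  let f := (P : Subgroup G).normalizerMonoidHom
  have hcard : Nat.card f.range = (Subgroup.centralizer (P : Set G)).relIndex
      (Subgroup.normalizer (P : Set G)) := by
    rw [← Subgroup.index_ker, Subgroup.normalizerMonoidHom_ker]
    rfl
  have hne : Nat.card f.range ≠ 1 := fun h =>
    not_normalizer_le_centralizer_sylow hG h3 P (Subgroup.relIndex_eq_one.1 (hcard ▸ h))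
  obtain ⟨p, hp, hpdvd⟩ := Nat.exists_prime_and_dvd hne
  have hp3 : p ≠ 3 := by
    rintro rfl
    have hPC : (P : Subgroup G) ≤ Subgroup.centralizer (P : Set G) :=
      Subgroup.le_centralizer (P : Subgroup G)
    exact P.not_dvd_index (hpdvd.trans (hcard ▸ (Subgroup.relIndex_dvd_of_le_left _ hPC).trans
      (Subgroup.relIndex_dvd_index_of_le Subgroup.le_normalizer)))
  have := Fact.mk hp
  obtain ⟨φ, hφ⟩ := exists_prime_orderOf_dvd_card' p hpdvd
  obtain ⟨x, hx⟩ := φ.2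
  rw [← Subgroup.orderOf_coe, ← hx] at hφ
  obtain rfl := eq_two_of_orderOf_mulAut hP hp hp3 hφ
  obtain ⟨u, hu1, hu⟩ := exists_map_eq_inv_of_sq_eq_one (hφ ▸ pow_orderOf_eq_one _)
    (fun h => by simp [h] at hφ)
  obtain ⟨k, hk⟩ : ∃ k, orderOf (u ^ k) = 3 := by
    have := Fact.mk Nat.prime_three
    exact ⟨_, orderOf_pow_orderOf_div (orderOf_pos u).ne' (P.isPGroup'.dvd_orderOf hu1)⟩
  refine ⟨(u ^ k : P), (u ^ k : P).2, by rw [Subgroup.orderOf_coe, hk], isConj_iff.2 ⟨x, ?_⟩⟩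
  have := congrArg Subtype.val (show f x (u ^ k) = (u ^ k)⁻¹ by rw [map_pow, hu, inv_pow])
  exact this

end Inverted

/-! ### Simple groups of order not divisible by nine -/

section NotNineDvd

variable {G : Type*} [Group G]

theorem eq_one_or_eq_or_eq_inv_of_mem_zpowers {g y : G} (hg : orderOf g = 3)
    (hy : y ∈ Subgroup.zpowers g) : y = 1 ∨ y = g ∨ y = g⁻¹ := by
  have hfin : IsOfFinOrder g := orderOf_pos_iff.1 (by omega)
  obtain ⟨k, hk, rfl⟩ := (hfin.mem_powers_iff_mem_range_orderOf.1
    (hfin.mem_powers_iff_mem_zpowers.2 hy)) |> mem_image.1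
  rw [hg, mem_range] at hk
  interval_cases k
  · exact .inl (pow_zero g)
  · exact .inr (.inl (pow_one g))
  · exact .inr (.inr (eq_inv_of_mul_eq_one_left
      (by rw [← pow_succ, orderOf_dvd_iff_pow_eq_one.1 hg.dvd])))

theorem isConj_of_pow_three_eq_one [Finite G] (h9 : ¬ 9 ∣ Nat.card G) {g y : G}
    (hg : orderOf g = 3) (hreal : IsConj g g⁻¹) (hy : y ^ 3 = 1) (hy1 : y ≠ 1) : IsConj g y := by
  have := Fact.mk Nat.prime_three
  have hfac : (Nat.card G).factorization 3 = 1 := by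
    have h3 : 3 ^ 1 ∣ Nat.card G := by rw [pow_one, ← hg]; exact orderOf_dvd_natCard g
    have h3' : ¬ 3 ^ 2 ∣ Nat.card G := h9
    rw [Nat.prime_three.pow_dvd_iff_le_factorization Nat.card_pos.ne'] at h3 h3'
    omega
  let P : Sylow 3 G := Sylow.ofCard (Subgroup.zpowers g) (by rw [hfac, Nat.card_zpowers, hg]; rfl)
  have hyP : IsPGroup 3 (Subgroup.zpowers y) :=
    IsPGroup.of_card (n := 1) (by rw [Nat.card_zpowers, orderOf_eq_prime hy hy1]; rfl)
  obtain ⟨Q, hQ⟩ := hyP.exists_le_sylow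
  obtain ⟨c, hc⟩ := MulAction.exists_smul_eq G Q P
  have hmem : c * y * c⁻¹ ∈ Subgroup.zpowers g := by
    change _ ∈ (P : Subgroup G)
    rw [← hc, Sylow.coe_subgroup_smul]
    exact Subgroup.smul_mem_pointwise_smul y (MulAut.conj c) (Q : Subgroup G)
      (hQ (Subgroup.mem_zpowers y))
  have hconj : IsConj y (c * y * c⁻¹) := isConj_iff.2 ⟨c, rfl⟩
  obtain h | h | h := eq_one_or_eq_or_eq_inv_of_mem_zpowers hg hmem
  · exact absurd (conj_eq_one_iff.1 h) hy1
  · exact (h ▸ hconj).symm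
  · exact hreal.trans (h ▸ hconj).symm

theorem exists_commute_orderOf_prime [Finite G] {g : G} (h9 : ¬ 9 ∣ Nat.card G) (hg : orderOf g = 3)
    (hC : Nat.card (Subgroup.centralizer {g}) ≠ 3) :
    ∃ u p, Nat.Prime p ∧ p ≠ 3 ∧ orderOf u = p ∧ Commute g u := by
  have hgC : g ∈ Subgroup.centralizer {g} := Subgroup.mem_centralizer_singleton_iff.2 rfl
  obtain ⟨k, hk⟩ : 3 ∣ Nat.card (Subgroup.centralizer {g}) :=
    hg ▸ Subgroup.orderOf_dvd_natCard _ hgC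
  obtain ⟨p, hp, hpk⟩ := Nat.exists_prime_and_dvd (n := k) (by rintro rfl; exact hC hk)
  have := Fact.mk hp
  obtain ⟨u, hu⟩ := exists_prime_orderOf_dvd_card' p (hk ▸ hpk.mul_left 3)
  refine ⟨u, p, hp, ?_, by rw [Subgroup.orderOf_coe, hu],
    (Subgroup.mem_centralizer_singleton_iff.1 u.2).symm⟩
  rintro rfl
  exact h9 ((hk ▸ mul_dvd_mul_left 3 hpk).trans (Subgroup.card_subgroup_dvd_card _))

theorem index_centralizer_le_of_commute_of_coprime [Finite G] {g u : G} (hgu : Commute g u)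
    (hcop : (orderOf g).Coprime (orderOf u)) :
    (Subgroup.centralizer {g}).index ≤ (Subgroup.centralizer {g * u}).index := by
  refine Subgroup.index_antitone fun x hx => ?_
  rw [Subgroup.mem_centralizer_singleton_iff] at hx ⊢
  obtain ⟨k, hk⟩ : ∃ k, (g ^ orderOf u) ^ k = g :=
    (exists_pow_eq_self_of_coprime hcop.symm)
  have hpow : (g * u) ^ (orderOf u * k) = g := by
    rw [pow_mul, hgu.mul_pow, pow_orderOf_eq_one, mul_one, hk]
  have hcomm : Commute x ((g * u) ^ (orderOf u * k)) := Commute.pow_right hx _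
  rwa [hpow] at hcomm

variable [Fintype G]

theorem card_cube_roots_le_of_not_nine_dvd (h9 : ¬ 9 ∣ Nat.card G) {g : G} (hg : orderOf g = 3)
    (hreal : IsConj g g⁻¹) :
    #{x : G | x ^ 3 = 1} ≤ 1 + (Subgroup.centralizer {g}).index := by
  rw [← card_isConj, ← card_singleton (1 : G)]
  refine (card_le_card fun y hy => ?_).trans (card_union_le _ _)
  rw [mem_union, mem_singleton, mem_filter_univ, or_iff_not_imp_left]
  exact isConj_of_pow_three_eq_one h9 hg hreal ((mem_filter_univ y).1 hy)

variable [IsSimpleGroup G]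

theorem lt_sum_orderOf_of_not_three_dvd (hG : ¬ Group.IsSolvable G) (h3 : ¬ 3 ∣ Nat.card G) :
    311 * Nat.card G < 100 * ∑ x : G, orderOf x := by
  obtain ⟨p, hp, h5, hpG⟩ := exists_prime_ge_five_dvd_card hG
    (fun h9 => h3 (dvd_trans (by norm_num) h9))
  have := Fact.mk hp
  have hI := thirty_mul_card_involutions_le (.of_isSimpleGroup hG) h5 hpG
  have hT : #{x : G | x ^ 3 = 1} = 1 := by
    rw [card_eq_one]
    refine ⟨1, ext fun x => ?_⟩
    rw [mem_filter_univ, mem_singleton]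
    refine ⟨fun hx => by_contra fun hx1 => h3 ?_, fun hx => by rw [hx, one_pow]⟩
    exact orderOf_eq_prime hx hx1 ▸ orderOf_dvd_natCard x
  have hG0 : 0 < Nat.card G := Nat.card_pos
  have := four_mul_card_lt hp h5 hpG
  omega

-- The elements `g * u` of order at least six compensate for those of order three.
theorem lt_sum_orderOf_of_card_centralizer_ne_three (hG : ¬ Group.IsSolvable G)
    (h9 : ¬ 9 ∣ Nat.card G) {g : G} (hg : orderOf g = 3) (hreal : IsConj g g⁻¹)
    (hC : Nat.card (Subgroup.centralizer {g}) ≠ 3) :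
    311 * Nat.card G < 100 * ∑ x : G, orderOf x := by
  obtain ⟨p, hp, h5, hpG⟩ := exists_prime_ge_five_dvd_card hG h9
  have := Fact.mk hp
  have hI := thirty_mul_card_involutions_le (.of_isSimpleGroup hG) h5 hpG
  have hT := card_cube_roots_le_of_not_nine_dvd h9 hg hreal
  obtain ⟨u, q, hq, hq3, hu, hgu⟩ := exists_commute_orderOf_prime h9 hg hC
  have hcop : (orderOf g).Coprime (orderOf u) := by
    rw [hg, hu]
    exact (Nat.coprime_primes Nat.prime_three hq).2 hq3.symm
  have hsix (y : G) (hy : y ∈ ({y | IsConj (g * u) y} : Finset G)) : 4 + 2 ≤ orderOf y := by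
    obtain ⟨c, rfl⟩ := isConj_iff.1 ((mem_filter_univ _).1 hy)
    rw [← MulAut.conj_apply, MulEquiv.orderOf_eq,
      hgu.orderOf_mul_eq_mul_orderOf_of_coprime hcop, hg, hu]
    have := hq.two_le
    omega
  have hsum := four_mul_card_add_le _ hsix
  rw [card_isConj] at hsum
  have hb := index_centralizer_le_of_commute_of_coprime hgu hcop
  have hb0 := (Subgroup.centralizer {g}).index_ne_zero_of_finite
  have hG0 : 0 < Nat.card G := Nat.card_pos
  omega

end NotNineDvd

/-! ### Self-centralizing elements of order three -/

section SelfCentralizing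

variable {G : Type*} [Group G] {g t : G}

theorem ne_inv_of_orderOf_eq_three (hg : orderOf g = 3) : g ≠ g⁻¹ := fun h => by
  have hdvd : orderOf g ∣ 2 := orderOf_dvd_of_pow_eq_one (by rw [sq, mul_eq_one_iff_eq_inv, ← h])
  rw [hg] at hdvd
  norm_num at hdvd

theorem centralizer_eq_zpowers_of_card_eq_orderOf [Finite G]
    (h : Nat.card (Subgroup.centralizer {g}) = orderOf g) :
    Subgroup.centralizer {g} = Subgroup.zpowers g :=
  (Subgroup.eq_of_le_of_card_ge
    (Subgroup.zpowers_le.2 (Subgroup.mem_centralizer_singleton_iff.2 rfl))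
    (by rw [Nat.card_zpowers, h])).symm

theorem exists_sq_eq_one_semiconjBy_inv (hg : orderOf g = 3)
    (hC : Subgroup.centralizer {g} = Subgroup.zpowers g) (hreal : IsConj g g⁻¹) :
    ∃ t : G, t ^ 2 = 1 ∧ SemiconjBy t g g⁻¹ := by
  obtain ⟨x, hx⟩ := isConj_iff.1 hreal
  have hxg : SemiconjBy x g g⁻¹ := mul_inv_eq_iff_eq_mul.1 hx
  have hx2 : x ^ 2 ∈ Subgroup.zpowers g := by
    rw [← hC, Subgroup.mem_centralizer_singleton_iff, sq]
    have := hxg.inv_right.mul_left hxg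
    rwa [inv_inv] at this
  have hne : ¬ Commute x g := fun h =>
    ne_inv_of_orderOf_eq_three hg (mul_right_cancel (h.eq.symm.trans hxg.eq))
  obtain h | h | h := eq_one_or_eq_or_eq_inv_of_mem_zpowers hg hx2
  · exact ⟨x, h, hxg⟩
  · exact absurd (h ▸ Commute.self_pow x 2) hne
  · exact absurd (Commute.inv_right_iff.1 (h ▸ Commute.self_pow x 2)) hne

theorem semiconjBy_inv_of_mem_zpowers (htg : SemiconjBy t g g⁻¹) {a : G}
    (ha : a ∈ Subgroup.zpowers g) : SemiconjBy t a a⁻¹ := by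
  obtain ⟨k, rfl⟩ := ha
  have := htg.zpow_right k
  rwa [inv_zpow] at this

theorem commute_of_sq_eq_one {y z : G} (hy : y ^ 2 = 1) (hz : z ^ 2 = 1) (hyz : (y * z) ^ 2 = 1) :
    Commute y z := by
  rw [sq, ← eq_inv_iff_mul_eq_one] at hy hz hyz
  rw [Commute, SemiconjBy, hyz, mul_inv_rev, ← hy, ← hz]

theorem semiconjBy_inv_of_sq_eq_one {y c : G} (hy : y ^ 2 = 1) (hyc : (y * c) ^ 2 = 1) :
    SemiconjBy y c c⁻¹ := by
  rw [sq, ← eq_inv_iff_mul_eq_one] at hy hyc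
  rw [SemiconjBy, hyc, mul_inv_rev, ← hy]

-- Two involutions in one coset of `⟨g⟩` both invert `g`, hence lie in `⟨g⟩t`.
theorem mul_mem_zpowers_of_involutions (hg : orderOf g = 3)
    (hC : Subgroup.centralizer {g} = Subgroup.zpowers g) (htg : SemiconjBy t g g⁻¹) {x a b : G}
    (ha : a ∈ Subgroup.zpowers g) (hb : b ∈ Subgroup.zpowers g) (hab : a ≠ b)
    (hxa : (x * a) ^ 2 = 1) (hxb : (x * b) ^ 2 = 1) : x * t ∈ Subgroup.zpowers g := by
  have hinv : SemiconjBy (x * a) (a⁻¹ * b) (a⁻¹ * b)⁻¹ :=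
    semiconjBy_inv_of_sq_eq_one hxa (by rwa [mul_assoc, mul_inv_cancel_left])
  have hgmem : g ∈ Subgroup.zpowers (a⁻¹ * b) := by
    obtain h | h | h := eq_one_or_eq_or_eq_inv_of_mem_zpowers hg (mul_mem (inv_mem ha) hb)
    · exact absurd (inv_mul_eq_one.1 h) hab
    · rw [h]
      exact Subgroup.mem_zpowers g
    · rw [h, Subgroup.zpowers_inv]
      exact Subgroup.mem_zpowers g
  have hcomm : SemiconjBy (x * a * t) g g := by
    have := (semiconjBy_inv_of_mem_zpowers hinv hgmem).inv_right.mul_left htg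
    rwa [inv_inv] at this
  have hmem : x * a * t ∈ Subgroup.zpowers g := by
    rw [← hC, Subgroup.mem_centralizer_singleton_iff]
    exact hcomm
  have hat : t * a⁻¹ = a * t := by
    simpa using (semiconjBy_inv_of_mem_zpowers htg (inv_mem ha)).eq
  have := mul_mem hmem ha
  rwa [mul_assoc x, ← hat, mul_assoc, mul_assoc t, inv_mul_cancel, mul_one] at this

variable [Fintype G]

/-- The number of solutions of `z ^ 2 = 1` in the coset `x⟨g⟩`. -/
noncomputable def cosetInvolutions (g x : G) : ℕ :=
  #{a : G | a ∈ Subgroup.zpowers g ∧ (x * a) ^ 2 = 1}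

theorem sum_cosetInvolutions (g : G) :
    ∑ x, cosetInvolutions g x = orderOf g * #{x : G | x ^ 2 = 1} := by
  simp only [cosetInvolutions, ← filter_filter, card_filter _ (Finset.filter _ _)]
  rw [sum_comm, ← Nat.card_zpowers, ← card_filter_mem_subgroup, card_eq_sum_ones, sum_mul]
  refine sum_congr rfl fun a _ => ?_
  rw [one_mul, card_filter]
  exact Equiv.sum_comp (Equiv.mulRight a) fun x => if x ^ 2 = 1 then 1 else 0

theorem cosetInvolutions_add_le (hg : orderOf g = 3)
    (hC : Subgroup.centralizer {g} = Subgroup.zpowers g) (ht : t ^ 2 = 1)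
    (htg : SemiconjBy t g g⁻¹) (x : G) :
    cosetInvolutions g x + cosetInvolutions g (x * t) ≤
      1 + cosetInvolutions g x * cosetInvolutions g (x * t) := by
  have hpos (y : G) (hy : 2 ≤ cosetInvolutions g y) : 1 ≤ cosetInvolutions g (y * t) := by
    obtain ⟨a, ha, b, hb, hab⟩ := one_lt_card.1 hy
    rw [mem_filter_univ] at ha hb
    have hmem := mul_mem_zpowers_of_involutions hg hC htg ha.1 hb.1 hab ha.2 hb.2
    exact card_pos.2 ⟨(y * t)⁻¹, (mem_filter_univ _).2 ⟨inv_mem hmem, by simp⟩⟩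
  have hx := hpos x
  have hxt := hpos (x * t)
  rw [mul_assoc, ← sq, ht, mul_one] at hxt
  obtain h0 | h0 := Nat.eq_zero_or_pos (cosetInvolutions g x)
  · omega
  obtain h1 | h1 := Nat.eq_zero_or_pos (cosetInvolutions g (x * t))
  · omega
  nlinarith

theorem card_involutions_pair_le (hg : orderOf g = 3) (ht : t ^ 2 = 1)
    (htg : SemiconjBy t g g⁻¹) {e : G} (he : e ∈ Subgroup.zpowers g) :
    #{y : G | y ^ 2 = 1 ∧ (y * (t * e)) ^ 2 = 1} ≤
      #{y : G | y ∈ Subgroup.centralizer {t} ∧ y ^ 2 = 1} := by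
  have hee : e * e = e⁻¹ := by
    have he3 : e ^ 3 = 1 := orderOf_dvd_iff_pow_eq_one.1 (hg ▸ orderOf_dvd_of_mem_zpowers he)
    exact eq_inv_of_mul_eq_one_left (by rw [← sq, ← pow_succ, he3])
  have hte : t * e = e * t * e⁻¹ := by
    have hte' := (semiconjBy_inv_of_mem_zpowers htg (inv_mem he)).eq
    rw [inv_inv] at hte'
    rw [← hte', mul_assoc, ← mul_inv_rev, hee, inv_inv]
  refine card_le_card_of_injOn (fun y => e⁻¹ * y * e) (fun y hy => ?_)
    fun a _ b _ hab => by simpa using hab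
  obtain ⟨hy2, hyt⟩ := (mem_filter_univ _).1 hy
  have hcomm := commute_of_sq_eq_one hy2 (by rw [hte, conj_pow, ht, mul_one, mul_inv_cancel]) hyt
  refine (mem_filter_univ _).2 ⟨Subgroup.mem_centralizer_singleton_iff.2 ?_, ?_⟩
  · rw [hte] at hcomm
    exact (Commute.conj_iff e).1 (by simpa [mul_assoc] using hcomm)
  · simpa [hy2] using (conj_pow (i := 2) (a := e⁻¹) (b := y))

theorem sum_cosetInvolutions_mul_le (hg : orderOf g = 3) (ht : t ^ 2 = 1)
    (htg : SemiconjBy t g g⁻¹) :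
    ∑ x, cosetInvolutions g x * cosetInvolutions g (x * t) ≤
      9 * #{y : G | y ∈ Subgroup.centralizer {t} ∧ y ^ 2 = 1} := by
  let Z : Finset G := {a | a ∈ Subgroup.zpowers g}
  have hZ : #Z = 3 := by rw [card_filter_mem_subgroup, Nat.card_zpowers, hg]
  have hpair (a b : G) (ha : a ∈ Z) (hb : b ∈ Z) :
      #{x : G | (x * a) ^ 2 = 1 ∧ (x * t * b) ^ 2 = 1} ≤
        #{y : G | y ∈ Subgroup.centralizer {t} ∧ y ^ 2 = 1} := by
    rw [mem_filter_univ] at ha hb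
    refine le_trans (card_le_card_of_injOn (· * a) (fun x hx => ?_) (by simp))
      (card_involutions_pair_le hg ht htg (mul_mem ha hb))
    have hat : t = a * t * a := by
      rw [mul_assoc, (semiconjBy_inv_of_mem_zpowers htg ha).eq, mul_inv_cancel_left]
    rw [coe_filter_univ, Set.mem_ofPred, mul_assoc x, hat] at hx
    simpa [mul_assoc] using hx
  have hcount (x : G) : cosetInvolutions g x = ∑ a ∈ Z, if (x * a) ^ 2 = 1 then 1 else 0 := by
    rw [cosetInvolutions, ← filter_filter, card_filter]
  calc ∑ x, cosetInvolutions g x * cosetInvolutions g (x * t)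
      = ∑ a ∈ Z, ∑ b ∈ Z, #{x : G | (x * a) ^ 2 = 1 ∧ (x * t * b) ^ 2 = 1} := by
        simp only [hcount, sum_mul_sum, card_filter, ite_and, ite_mul, one_mul, zero_mul]
        rw [sum_comm]
        exact sum_congr rfl fun a _ => sum_comm
    _ ≤ ∑ a ∈ Z, ∑ b ∈ Z, #{y : G | y ∈ Subgroup.centralizer {t} ∧ y ^ 2 = 1} :=
        sum_le_sum fun a ha => sum_le_sum fun b hb => hpair a b ha hb
    _ = 9 * #{y : G | y ∈ Subgroup.centralizer {t} ∧ y ^ 2 = 1} := by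
        simp only [sum_const, hZ, smul_eq_mul]
        ring

theorem six_mul_card_involutions_le (hg : orderOf g = 3)
    (hC : Subgroup.centralizer {g} = Subgroup.zpowers g) (ht : t ^ 2 = 1)
    (htg : SemiconjBy t g g⁻¹) :
    6 * #{x : G | x ^ 2 = 1} ≤
      Nat.card G + 9 * #{y : G | y ∈ Subgroup.centralizer {t} ∧ y ^ 2 = 1} := by
  have hsum := sum_le_sum fun x (_ : x ∈ univ) => cosetInvolutions_add_le hg hC ht htg x
  have hshift : ∑ x, cosetInvolutions g (x * t) = ∑ x, cosetInvolutions g x :=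
    Equiv.sum_comp (Equiv.mulRight t) (cosetInvolutions g)
  have hmul := sum_cosetInvolutions_mul_le hg ht htg
  simp only [sum_add_distrib, hshift, sum_cosetInvolutions, hg, sum_const, card_univ,
    smul_eq_mul, mul_one, ← Nat.card_eq_fintype_card] at hsum
  omega

end SelfCentralizing

/-! ### Groups with many involutions -/

section ManyInvolutions

variable {G : Type*} [Group G]

theorem two_mul_card_le_add_card_translate [Finite G] (A : Finset G) (x : G) :
    2 * #A ≤ Nat.card G + #{a ∈ A | x * a ∈ A} := by
  have := Fintype.ofFinite G
  have hcard : #{a : G | x * a ∈ A} = #A := card_equiv (Equiv.mulLeft x) (by simp)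
  have hunion := card_union_add_card_inter A {a | x * a ∈ A}
  rw [hcard, ← filter_mem_eq_inter] at hunion
  simp only [mem_filter_univ] at hunion
  have := card_le_univ (A ∪ ({a | x * a ∈ A} : Finset G))
  rw [← Nat.card_eq_fintype_card] at this
  omega

theorem eq_top_of_card_lt_two_mul_card [Finite G] {K : Subgroup G}
    (hK : Nat.card G < 2 * Nat.card K) : K = ⊤ := by
  by_contra hne
  have := Nat.mul_le_mul_left (Nat.card K) (Subgroup.one_lt_index_of_ne_top hne)
  rw [K.card_mul_index] at this
  omega

theorem sq_eq_one_of_three_mul_card_lt [Fintype G]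
    (hG : 3 * Nat.card G < 4 * #{x : G | x ^ 2 = 1}) (x : G) : x ^ 2 = 1 := by
  let A : Finset G := {x | x ^ 2 = 1}
  have hA (x : G) : 2 * #A ≤ Nat.card G + #{a ∈ A | x * a ∈ A} :=
    two_mul_card_le_add_card_translate A x
  replace hG : 3 * Nat.card G < 4 * #A := hG
  have hcenter (u : G) (hu : u ^ 2 = 1) (y : G) : Commute y u := by
    have hle : #{a ∈ A | u * a ∈ A} ≤ Nat.card (Subgroup.centralizer {u}) := by
      rw [← card_filter_mem_subgroup]
      refine card_le_card fun a ha => ?_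
      simp only [A, mem_filter, mem_univ, true_and] at ha ⊢
      exact Subgroup.mem_centralizer_singleton_iff.2 (commute_of_sq_eq_one hu ha.1 ha.2).symm
    have htop : Subgroup.centralizer {u} = ⊤ :=
      eq_top_of_card_lt_two_mul_card (by have := hA u; omega)
    exact Subgroup.mem_centralizer_singleton_iff.1 (htop ▸ Subgroup.mem_top y)
  obtain ⟨a, ha⟩ := card_pos.1 (by have := hA x; omega : 0 < #{a ∈ A | x * a ∈ A})
  simp only [A, mem_filter, mem_univ, true_and] at ha
  simpa only [(hcenter a ha.1 x).mul_pow, ha.1, mul_one] using ha.2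

theorem four_mul_card_involutions_subgroup_le [Fintype G] (H : Subgroup G) {p : ℕ} [Fact p.Prime]
    (h2 : p ≠ 2) (hp : p ∣ Nat.card H) :
    4 * #{x : G | x ∈ H ∧ x ^ 2 = 1} ≤ 3 * Nat.card H := by
  have hcard : #{x : G | x ∈ H ∧ x ^ 2 = 1} = #{x : H | x ^ 2 = 1} := by
    refine (card_bij (fun (x : H) _ => (x : G)) (fun x hx => ?_) (fun _ _ _ _ => (Subtype.ext ·))
      fun x hx => ?_).symm
    · rw [mem_filter_univ] at hx ⊢
      exact ⟨x.2, congrArg Subtype.val hx⟩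
    · rw [mem_filter_univ] at hx
      exact ⟨⟨x, hx.1⟩, (mem_filter_univ _).2 (Subtype.ext hx.2), rfl⟩
  rw [hcard]
  by_contra hle
  obtain ⟨y, hy⟩ := exists_prime_orderOf_dvd_card' p hp
  have hsq : y ^ 2 = 1 :=
    sq_eq_one_of_three_mul_card_lt (Nat.lt_of_not_le fun h => hle (by convert h)) y
  have hdvd := orderOf_dvd_of_pow_eq_one hsq
  rw [hy] at hdvd
  exact h2 ((Nat.prime_dvd_prime_iff_eq Fact.out Nat.prime_two).1 hdvd)

end ManyInvolutions

section SimpleNotNineDvd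

variable {G : Type*} [Group G]

theorem conj_mem_filter_isConj [Fintype G] {t z : G} (x : G)
    (hz : z ∈ ({z | IsConj t z} : Finset G)) :
    x * z * x⁻¹ ∈ ({z | IsConj t z} : Finset G) :=
  (mem_filter_univ _).2 (((mem_filter_univ _).1 hz).trans (isConj_iff.2 ⟨x, rfl⟩))

theorem three_dvd_index_centralizer [Finite G] (h9 : ¬ 9 ∣ Nat.card G) {g t : G}
    (hg : orderOf g = 3) (hreal : IsConj g g⁻¹) (hC : Nat.card (Subgroup.centralizer {g}) = 3)
    (ht : orderOf t = 2) : 3 ∣ (Subgroup.centralizer {t}).index := by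
  have := Fintype.ofFinite G
  have := Fact.mk Nat.prime_three
  have h3 : 3 ∣ Nat.card G := hg ▸ orderOf_dvd_natCard g
  rw [← Subgroup.card_mul_index (Subgroup.centralizer {t})] at h3
  refine (Nat.prime_three.dvd_mul.1 h3).resolve_left fun h => ?_
  obtain ⟨⟨y, hyt⟩, hy⟩ := exists_prime_orderOf_dvd_card' 3 h
  rw [Subgroup.orderOf_mk] at hy
  have hgy : IsConj g y := isConj_of_pow_three_eq_one h9 hg hreal (hy ▸ pow_orderOf_eq_one y)
    fun h => by simp [h] at hy
  obtain ⟨c, hc⟩ := isConj_iff.1 hgy.symm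
  have hmem : c * t * c⁻¹ ∈ Subgroup.centralizer {g} := by
    rw [← hc]
    exact Subgroup.mem_centralizer_singleton_iff.2
      ((Commute.conj_iff c).2 (Subgroup.mem_centralizer_singleton_iff.1 hyt).symm)
  have hdvd := Subgroup.orderOf_dvd_natCard _ hmem
  rw [← MulAut.conj_apply, MulEquiv.orderOf_eq, ht, hC] at hdvd
  norm_num at hdvd

variable [IsSimpleGroup G]

theorem eq_one_of_forall_isConj_commute [Finite G] (hG : ¬ Group.IsSolvable G) {t y : G}
    (ht : t ≠ 1) (hy : ∀ z, IsConj t z → Commute y z) : y = 1 := by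
  have htop : Subgroup.normalClosure {t} = ⊤ :=
    Subgroup.normalClosure_normal.eq_bot_or_eq_top.resolve_left fun h =>
      ht ((Subgroup.mem_bot (G := G)).1 (h ▸ Subgroup.subset_normalClosure rfl))
  have hle : Subgroup.normalClosure {t} ≤ Subgroup.centralizer {y} := by
    rw [Subgroup.normalClosure, Subgroup.closure_le]
    intro z hz
    obtain ⟨w, hw, hz⟩ := Group.mem_conjugatesOfSet_iff.1 hz
    rw [Set.mem_singleton_iff.1 hw] at hz
    exact Subgroup.mem_centralizer_singleton_iff.2 (hy z hz).symm
  refine (SolvableRadicalTrivial.of_isSimpleGroup hG).eq_one_of_forall_commute fun x => ?_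
  exact Subgroup.mem_centralizer_singleton_iff.1 (hle (htop ▸ Subgroup.mem_top x))

theorem card_filter_isConj_commute_lt [Fintype G] (hG : ¬ Group.IsSolvable G) {t x : G}
    (ht : t ≠ 1) (hx : x ≠ 1) :
    #{z ∈ ({z | IsConj t z} : Finset G) | Commute x z} < (Subgroup.centralizer {t}).index := by
  rw [← card_isConj]
  refine lt_of_le_of_ne (card_filter_le _ _) fun h => hx ?_
  refine eq_one_of_forall_isConj_commute hG ht fun z hz => ?_
  exact filter_card_eq h z ((mem_filter_univ _).2 hz)

theorem eq_five_of_index_centralizer_eq_six [Fintype G] (hG : ¬ Group.IsSolvable G) {t y : G}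
    (ht : t ≠ 1) (h6 : (Subgroup.centralizer {t}).index = 6) {p : ℕ} [Fact p.Prime] (h5 : 5 ≤ p)
    (hy : orderOf y = p) (hyt : Commute y t) :
    p = 5 ∧ {z ∈ ({z | IsConj t z} : Finset G) | Commute y z} = {t} := by
  have hmem : t ∈ ({z ∈ ({z | IsConj t z} : Finset G) | Commute y z} : Finset G) :=
    mem_filter.2 ⟨(mem_filter_univ _).2 (IsConj.refl t), hyt⟩
  have hyp : y ^ p = 1 := hy ▸ pow_orderOf_eq_one y
  have hmod := card_modEq_card_filter_commute hyp
    fun z hz => conj_mem_filter_isConj (t := t) y hz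
  have hy1 : y ≠ 1 := fun h => by
    rw [h, orderOf_one] at hy
    omega
  have hlt := card_filter_isConj_commute_lt hG ht hy1
  have hpos := card_pos.2 ⟨t, hmem⟩
  rw [card_isConj, h6] at hmod
  rw [h6] at hlt
  have hle := Nat.le_of_dvd (by omega) ((Nat.modEq_iff_dvd' hlt.le).1 hmod.symm)
  obtain ⟨s, hs⟩ := card_eq_one.1
    (by omega : #{z ∈ ({z | IsConj t z} : Finset G) | Commute y z} = 1)
  rw [hs, mem_singleton] at hmem
  exact ⟨by omega, hs.trans (by rw [hmem])⟩

-- An element of order five centralizing `t` fixes only `t` among the six conjugates of `t`, so `t`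
-- itself fixes one or six of them; being an involution it fixes an even number.
theorem index_centralizer_ne_six [Finite G] (hG : ¬ Group.IsSolvable G) {t : G} (ht : t ^ 2 = 1)
    (ht1 : t ≠ 1) {p : ℕ} [Fact p.Prime] (h5 : 5 ≤ p)
    (hp : p ∣ Nat.card (Subgroup.centralizer {t})) :
    (Subgroup.centralizer {t}).index ≠ 6 := by
  intro h6
  have := Fintype.ofFinite G
  obtain ⟨⟨y, hyt⟩, hy⟩ := exists_prime_orderOf_dvd_card' p hp
  rw [Subgroup.orderOf_mk] at hy
  have hyt : Commute y t := Subgroup.mem_centralizer_singleton_iff.1 hyt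
  obtain ⟨rfl, hfix⟩ := eq_five_of_index_centralizer_eq_six hG ht1 h6 h5 hy hyt
  let A : Finset G := {z | IsConj t z}
  have hAt : #A ≡ #{z ∈ A | Commute t z} [MOD 2] :=
    card_modEq_card_filter_commute ht fun z hz => conj_mem_filter_isConj t hz
  have hy5 : y ^ 5 = 1 := hy ▸ pow_orderOf_eq_one y
  have hBy : #{z ∈ A | Commute t z} ≡ #{z ∈ {z ∈ A | Commute t z} | Commute y z} [MOD 5] := by
    refine card_modEq_card_filter_commute hy5 fun z hz => ?_
    rw [mem_filter] at hz ⊢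
    refine ⟨conj_mem_filter_isConj y hz.1, ?_⟩
    have := (Commute.conj_iff y).2 hz.2
    rwa [hyt.eq, mul_inv_cancel_right] at this
  have hB : {z ∈ {z ∈ A | Commute t z} | Commute y z} = {t} := by
    rw [filter_comm, hfix, filter_singleton, if_pos (Commute.refl t)]
  have hlt : #{z ∈ A | Commute t z} < _ := card_filter_isConj_commute_lt hG ht1 ht1
  rw [hB, card_singleton] at hBy
  rw [card_isConj, h6] at hAt
  rw [h6] at hlt
  unfold Nat.ModEq at hAt hBy
  omega

theorem exists_prime_ge_five_dvd_card_centralizer [Finite G] (hG : ¬ Group.IsSolvable G)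
    (h9 : ¬ 9 ∣ Nat.card G) {t : G}
    (hd : (Subgroup.centralizer {t}).index = 6 ∨ (Subgroup.centralizer {t}).index = 12) :
    ∃ p, p.Prime ∧ 5 ≤ p ∧ p ∣ Nat.card (Subgroup.centralizer {t}) := by
  obtain ⟨p, hp, h5, hpG⟩ := exists_prime_ge_five_dvd_card hG h9
  refine ⟨p, hp, h5, ?_⟩
  rw [← Subgroup.card_mul_index (Subgroup.centralizer {t})] at hpG
  refine (hp.dvd_mul.1 hpG).resolve_right fun h => ?_
  have h12 : p ∣ 2 ^ 2 * 3 := h.trans (by obtain hd | hd := hd <;> norm_num [hd])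
  obtain h2 | h3 := hp.dvd_mul.1 h12
  · have := Nat.le_of_dvd two_pos (hp.dvd_of_dvd_pow h2)
    omega
  · have := Nat.le_of_dvd three_pos h3
    omega

theorem five_le_index_centralizer [Finite G] (hG : ¬ Group.IsSolvable G) {t : G} (ht : t ≠ 1) :
    5 ≤ (Subgroup.centralizer {t}).index :=
  five_le_index hG fun htop =>
    ht ((SolvableRadicalTrivial.of_isSimpleGroup hG).eq_one_of_forall_commute fun x =>
      Subgroup.mem_centralizer_singleton_iff.1 (htop ▸ Subgroup.mem_top x))

theorem lt_sum_orderOf_of_card_centralizer_eq_three [Fintype G] (hG : ¬ Group.IsSolvable G)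
    (h9 : ¬ 9 ∣ Nat.card G) {g : G} (hg : orderOf g = 3) (hreal : IsConj g g⁻¹)
    (hC : Nat.card (Subgroup.centralizer {g}) = 3) :
    311 * Nat.card G < 100 * ∑ x : G, orderOf x := by
  have hCg := centralizer_eq_zpowers_of_card_eq_orderOf (hC.trans hg.symm)
  obtain ⟨t, ht, htg⟩ := exists_sq_eq_one_semiconjBy_inv hg hCg hreal
  have ht1 : t ≠ 1 := by
    rintro rfl
    exact ne_inv_of_orderOf_eq_three hg (by simpa using htg.eq)
  have hI := six_mul_card_involutions_le hg hCg ht htg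
  have hT := card_cube_roots_le_of_not_nine_dvd h9 hg hreal
  have hgG := Subgroup.card_mul_index (Subgroup.centralizer {g})
  have htG := Subgroup.card_mul_index (Subgroup.centralizer {t})
  have h3d := three_dvd_index_centralizer h9 hg hreal hC (orderOf_eq_prime ht ht1)
  have h5d := five_le_index_centralizer hG ht1
  obtain ⟨p, hp, h5, hpG⟩ := exists_prime_ge_five_dvd_card hG h9
  have hord := four_mul_card_lt hp h5 hpG
  have hf : #{y : G | y ∈ Subgroup.centralizer {t} ∧ y ^ 2 = 1} ≤
      Nat.card (Subgroup.centralizer {t}) := by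
    rw [← card_filter_mem_subgroup]
    exact card_le_card (monotone_filter_right _ fun y _ hy => hy.1)
  have hpos : 0 < Nat.card (Subgroup.centralizer {t}) := Nat.card_pos
  rw [hC] at hgG
  by_contra hle
  have hd13 : (Subgroup.centralizer {t}).index ≤ 13 := by
    by_contra! hd
    have := Nat.mul_le_mul_left (Nat.card (Subgroup.centralizer {t})) hd
    omega
  obtain hd | hd | hd : (Subgroup.centralizer {t}).index = 9 ∨
      (Subgroup.centralizer {t}).index = 6 ∨ (Subgroup.centralizer {t}).index = 12 := by omega
  · exact h9 (hd ▸ Subgroup.index_dvd_card _)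
  · obtain ⟨q, hq, h5q, hqt⟩ := exists_prime_ge_five_dvd_card_centralizer hG h9 (.inl hd)
    have := Fact.mk hq
    exact index_centralizer_ne_six hG ht ht1 h5q hqt hd
  · obtain ⟨q, hq, h5q, hqt⟩ := exists_prime_ge_five_dvd_card_centralizer hG h9 (.inr hd)
    have := Fact.mk hq
    have := four_mul_card_involutions_subgroup_le _ (by omega) hqt
    rw [hd] at htG
    omega

theorem lt_sum_orderOf_of_three_dvd_of_not_nine_dvd [Fintype G] (hG : ¬ Group.IsSolvable G)
    (h3 : 3 ∣ Nat.card G) (h9 : ¬ 9 ∣ Nat.card G) :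
    311 * Nat.card G < 100 * ∑ x : G, orderOf x := by
  have P : Sylow 3 G := default
  obtain ⟨g, -, hg, hreal⟩ := exists_orderOf_eq_three_isConj_inv hG h3
    (fun h => h9 ((by norm_num : 9 ∣ 27).trans h)) P
  by_cases hC : Nat.card (Subgroup.centralizer {g}) = 3
  · exact lt_sum_orderOf_of_card_centralizer_eq_three hG h9 hg hreal hC
  · exact lt_sum_orderOf_of_card_centralizer_ne_three hG h9 hg hreal hC

end SimpleNotNineDvd

/-! ### Counting along the cosets of a subgroup of order three -/

section CosetCount

variable {G : Type*} [Group G] {g x y : G}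

theorem sq_mul_inv_eq_one (hx : x ^ 2 = 1) (hxg : (x * g) ^ 2 = 1) : (x * g⁻¹) ^ 2 = 1 := by
  have h : x * g⁻¹ = g * x := by
    simpa using (semiconjBy_inv_of_sq_eq_one hx hxg).inv_right.eq
  calc (x * g⁻¹) ^ 2 = x * g⁻¹ * (g * x) := by rw [pow_two, h]
    _ = x * x := by group
    _ = 1 := by rw [← pow_two, hx]

theorem cube_mul_inv_eq_one (hx : x ^ 2 = 1) (hxg : (x * g) ^ 3 = 1) : (x * g⁻¹) ^ 3 = 1 := by
  have h : x * g⁻¹ = x * (x * g)⁻¹ * x⁻¹ := by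
    rw [mul_inv_rev, mul_assoc, mul_assoc, ← mul_inv_rev, ← pow_two, hx, inv_one, mul_one]
  rw [h, conj_pow, inv_pow, hxg, inv_one, mul_one, mul_inv_cancel]

theorem inv_eq_mul_self_of_cube_eq_one (hx : x ^ 3 = 1) : x⁻¹ = x * x :=
  inv_eq_of_mul_eq_one_right (by rw [← pow_three, hx])

theorem eq_one_of_sq_eq_one_of_cube_eq_one (h2 : x ^ 2 = 1) (h3 : x ^ 3 = 1) : x = 1 := by
  rwa [pow_succ, h2, one_mul] at h3

theorem mk_centralizer_eq_iff {a b : G} :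
    (a : G ⧸ Subgroup.centralizer {g}) = b ↔ a * g * a⁻¹ = b * g * b⁻¹ := by
  rw [QuotientGroup.eq, Subgroup.mem_centralizer_singleton_iff]
  constructor <;> intro h
  · calc a * g * a⁻¹ = a * (g * (a⁻¹ * b)) * b⁻¹ := by group
      _ = b * g * b⁻¹ := by rw [← h]; group
  · calc a⁻¹ * b * g = a⁻¹ * (b * g * b⁻¹) * b := by group
      _ = g * (a⁻¹ * b) := by rw [← h]; group

variable [Fintype G]

/-- The `x` for which both `x` and `x * g` have order at most two; the coset of `x` modulo `⟨g⟩`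
then consists of such elements. -/
noncomputable def involutionCosets (g : G) : Finset G := {x | x ^ 2 = 1 ∧ (x * g) ^ 2 = 1}

/-- The `x` of order at most two for which `x * g` is a cube root of `1`. -/
noncomputable def mixedCosets (g : G) : Finset G := {x | x ^ 2 = 1 ∧ (x * g) ^ 3 = 1}

/-- For `g` of order three, the `x` whose coset modulo `⟨g⟩` consists of cube roots of `1`. -/
noncomputable def cubeRootCosets (g : G) : Finset G :=
  {x | x ^ 3 = 1 ∧ (x * g) ^ 3 = 1 ∧ (x * g⁻¹) ^ 3 = 1}

-- A coset with two elements of order at most two has three of them and no cube root of `1`; in a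
-- coset with exactly one of them, the two other elements are cube roots of `1` together.
theorem coset_count_le (hg : orderOf g = 3) (x : G) :
    2 * ((if x ^ 2 = 1 then 1 else 0) + (if (x * g) ^ 2 = 1 then 1 else 0) +
        (if (x * g⁻¹) ^ 2 = 1 then 1 else 0)) +
      ((if x ^ 3 = 1 then 1 else 0) + (if (x * g) ^ 3 = 1 then 1 else 0) +
        (if (x * g⁻¹) ^ 3 = 1 then 1 else 0)) ≤
    2 + 4 * (if x ∈ involutionCosets g then 1 else 0) +
      2 * ((if x ∈ mixedCosets g then 1 else 0) + (if x * g ∈ mixedCosets g then 1 else 0) +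
        (if x * g⁻¹ ∈ mixedCosets g then 1 else 0)) +
      (if x ∈ cubeRootCosets g then 1 else 0) := by
  have hg3 : g ^ 3 = 1 := hg ▸ pow_orderOf_eq_one g
  have hg1 : g ^ 2 ≠ 1 := fun h => by
    simp [eq_one_of_sq_eq_one_of_cube_eq_one h hg3] at hg
  have hgg : g⁻¹ = g * g := inv_eq_mul_self_of_cube_eq_one hg3
  have hsq (z : G) (h : z ^ 2 = 1) (h' : (z * g) ^ 2 = 1) : (z * g⁻¹) ^ 2 = 1 ∧ z ^ 3 ≠ 1 := by
    refine ⟨sq_mul_inv_eq_one h h', fun h3 => hg1 ?_⟩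
    rwa [eq_one_of_sq_eq_one_of_cube_eq_one h h3, one_mul] at h'
  have hsq' (z : G) (h : z ^ 2 = 1) (h' : (z * g⁻¹) ^ 2 = 1) : (z * g) ^ 2 = 1 := by
    simpa using sq_mul_inv_eq_one h h'
  have hcube (z : G) (h : z ^ 2 = 1) :
      ((z * g) ^ 3 = 1 ↔ (z * g⁻¹) ^ 3 = 1) ∧ (z ^ 3 = 1 → (z * g) ^ 3 = 1) := by
    refine ⟨⟨cube_mul_inv_eq_one h, fun h' => ?_⟩, fun h' => ?_⟩
    · simpa using cube_mul_inv_eq_one h h'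
    · rwa [eq_one_of_sq_eq_one_of_cube_eq_one h h', one_mul]
  have hxgg : x * g * g = x * g⁻¹ := by rw [hgg, mul_assoc]
  have hxgg' : x * g⁻¹ * g⁻¹ = x * g := by
    rw [mul_assoc, ← mul_inv_rev, ← hgg, inv_inv]
  have hx := hsq x
  have hxg := hsq (x * g)
  have hxg' := hsq (x * g⁻¹)
  have hx' := hsq' x
  have cx := hcube x
  have cxg := hcube (x * g)
  have cxg' := hcube (x * g⁻¹)
  simp only [hxgg, hxgg', mul_inv_cancel_right, inv_mul_cancel_right] at *
  simp only [involutionCosets, mixedCosets, cubeRootCosets, mem_filter_univ, inv_mul_cancel_right]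
  grind

theorem three_mul_card_le (hg : orderOf g = 3) :
    3 * (2 * #{x : G | x ^ 2 = 1} + #{x : G | x ^ 3 = 1}) ≤
      2 * Nat.card G + 4 * #(involutionCosets g) + 6 * #(mixedCosets g) +
        #(cubeRootCosets g) := by
  have hshift (c : G) (P : G → Prop) [DecidablePred P] :
      ∑ x, (if P (x * c) then 1 else 0) = #{x | P x} := by
    rw [card_filter]
    exact Equiv.sum_comp (Equiv.mulRight c) fun x => if P x then 1 else 0
  have h := sum_le_sum fun (x : G) (_ : x ∈ univ) => coset_count_le hg x
  have hmixed (c : G) : #{x | x * c ∈ mixedCosets g} = #(mixedCosets g) := by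
    rw [card_filter, hshift c (· ∈ mixedCosets g), filter_univ_mem]
  simp only [sum_add_distrib, ← mul_sum, hshift _ (fun x => x ^ 2 = 1),
    hshift _ (fun x => x ^ 3 = 1), ← card_filter, hmixed, filter_univ_mem, sum_const, card_univ,
    smul_eq_mul, ← Nat.card_eq_fintype_card] at h
  omega

theorem mul_inv_eq_inv_of_mem_involutionCosets (hx : x ∈ involutionCosets g) :
    x * g * x⁻¹ = g⁻¹ := by
  obtain ⟨hx, hxg⟩ := (mem_filter_univ _).1 hx
  exact mul_inv_eq_of_eq_mul (semiconjBy_inv_of_sq_eq_one hx hxg).eq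

theorem card_involutionCosets_le (g : G) :
    #(involutionCosets g) ≤ Nat.card (Subgroup.centralizer {g}) := by
  obtain h | ⟨z, hz⟩ := (involutionCosets g).eq_empty_or_nonempty
  · simp [h]
  rw [← card_filter_mk_eq _ (z : G ⧸ Subgroup.centralizer {g})]
  refine card_le_card fun x hx => (mem_filter_univ _).2 (mk_centralizer_eq_iff.2 ?_)
  rw [mul_inv_eq_inv_of_mem_involutionCosets hx, mul_inv_eq_inv_of_mem_involutionCosets hz]

theorem involutionCosets_eq_empty (hg : ¬ IsConj g g⁻¹) : involutionCosets g = ∅ :=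
  eq_empty_of_forall_notMem fun x hx =>
    hg (isConj_iff.2 ⟨x, mul_inv_eq_inv_of_mem_involutionCosets hx⟩)

theorem inv_eq_of_mem_mixedCosets (hx : x ∈ mixedCosets g) :
    x⁻¹ = g * (x * g * x⁻¹) * g := by
  obtain ⟨hx, hxg⟩ := (mem_filter_univ _).1 hx
  have hinv : x⁻¹ = x := inv_eq_of_mul_eq_one_left (by rwa [← pow_two])
  refine inv_eq_of_mul_eq_one_right ?_
  rw [← hxg, hinv, pow_three]
  group

theorem mul_inv_mul_eq_of_mem_mixedCosets (hg : g ^ 3 = 1) (hx : x ∈ mixedCosets g) :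
    (x * g * x⁻¹) * g⁻¹ * (x * g * x⁻¹) = g := by
  have hinv := inv_eq_of_mem_mixedCosets hx
  have hsq : x⁻¹ * x⁻¹ = 1 := by
    rw [← mul_inv_rev, ← pow_two, ((mem_filter_univ _).1 hx).1, inv_one]
  generalize x * g * x⁻¹ = y at hinv ⊢
  have hgg : g⁻¹ = g * g := inv_eq_mul_self_of_cube_eq_one hg
  rw [hinv] at hsq
  calc y * g⁻¹ * y = g⁻¹ * (g * y * (g * g) * y * g) * g⁻¹ := by rw [← hgg]; group
    _ = g⁻¹ * (g * y * g * (g * y * g)) * g⁻¹ := by group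
    _ = g := by rw [hsq, mul_one, ← mul_inv_rev, ← hgg, inv_inv]

theorem injOn_conj_mixedCosets (g : G) :
    Set.InjOn (fun x => x * g * x⁻¹) (mixedCosets g : Set G) := fun a ha b hb hab => by
  dsimp only at hab
  rw [← inv_inj, inv_eq_of_mem_mixedCosets ha, inv_eq_of_mem_mixedCosets hb, hab]

theorem card_mixedCosets_le (g : G) : #(mixedCosets g) ≤ (Subgroup.centralizer {g}).index := by
  rw [← card_isConj]
  refine card_le_card_of_injOn _ (fun x _ => ?_) (injOn_conj_mixedCosets g)
  exact mem_coe.2 ((mem_filter_univ _).2 (isConj_iff.2 ⟨x, rfl⟩))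

-- `y` and `y⁻¹` cannot both satisfy `y * g⁻¹ * y = g`.
theorem two_mul_card_mixedCosets_le (hg : orderOf g = 3) (hreal : IsConj g g⁻¹) :
    2 * #(mixedCosets g) ≤ (Subgroup.centralizer {g}).index := by
  have hg3 : g ^ 3 = 1 := hg ▸ pow_orderOf_eq_one g
  let Y : Finset G := {y | IsConj g y ∧ y * g⁻¹ * y = g}
  have hY : #(mixedCosets g) ≤ #Y := by
    refine card_le_card_of_injOn _ (fun x hx => ?_) (injOn_conj_mixedCosets g)
    exact mem_coe.2 ((mem_filter_univ _).2
      ⟨isConj_iff.2 ⟨x, rfl⟩, mul_inv_mul_eq_of_mem_mixedCosets hg3 hx⟩)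
  have hconj {y : G} (hy : IsConj g y) : IsConj g y⁻¹ := by
    obtain ⟨c, rfl⟩ := isConj_iff.1 hy
    exact hreal.trans (isConj_iff.2 ⟨c, conj_inv.symm⟩)
  have hdisj : Disjoint Y (Y.map (Equiv.inv G).toEmbedding) := by
    rw [disjoint_left]
    intro y hy hy'
    obtain ⟨hgy, h⟩ := (mem_filter_univ _).1 hy
    obtain ⟨-, h' : y⁻¹ * g⁻¹ * y⁻¹ = g⟩ := (mem_filter_univ _).1 (mem_map_equiv.1 hy')
    have hyy : y⁻¹ = y * y := by
      obtain ⟨c, rfl⟩ := isConj_iff.1 hgy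
      exact inv_eq_mul_self_of_cube_eq_one (by rw [conj_pow, hg3, mul_one, mul_inv_cancel])
    refine ne_inv_of_orderOf_eq_three hg ?_
    have hginv : g⁻¹ = y * g * y := by
      calc g⁻¹ = y * (y⁻¹ * g⁻¹ * y⁻¹) * y := by group
        _ = y * g * y := by rw [h']
    have hyinv : y⁻¹ * g⁻¹ * y⁻¹ = g⁻¹ := by
      calc y⁻¹ * g⁻¹ * y⁻¹ = y * (y * g⁻¹ * y) * y := by rw [hyy]; simp only [mul_assoc]
        _ = g⁻¹ := by rw [h, ← hginv]
    exact h'.symm.trans hyinv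
  calc 2 * #(mixedCosets g) ≤ #Y + #(Y.map (Equiv.inv G).toEmbedding) := by
        rw [card_map]
        omega
    _ = #(Y ∪ Y.map (Equiv.inv G).toEmbedding) := (card_union_of_disjoint hdisj).symm
    _ ≤ #{y | IsConj g y} := by
        refine card_le_card (union_subset (fun y hy => ?_) fun y hy => ?_)
        · exact (mem_filter_univ _).2 ((mem_filter_univ _).1 hy).1
        · rw [mem_map_equiv] at hy
          exact (mem_filter_univ _).2 (inv_inv y ▸ hconj ((mem_filter_univ _).1 hy).1)
    _ = (Subgroup.centralizer {g}).index := card_isConj g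

theorem commute_and_conj_eq_of_mem_cubeRootCosets (hx : x ∈ cubeRootCosets g) :
    Commute g (x * g * x⁻¹) ∧ x * (x * g * x⁻¹) * x⁻¹ = (g * (x * g * x⁻¹))⁻¹ := by
  obtain ⟨hx, hxg, hxg'⟩ := (mem_filter_univ _).1 hx
  have hinv : x⁻¹ = x * x := inv_eq_mul_self_of_cube_eq_one hx
  have key (k : G) (hk : (x * k) ^ 3 = 1) :
      x * (x * k * x⁻¹) * x⁻¹ = (k * (x * k * x⁻¹))⁻¹ := by
    refine eq_inv_of_mul_eq_one_left ?_
    calc x * (x * k * x⁻¹) * x⁻¹ * (k * (x * k * x⁻¹))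
        = x * (x * k * (x * x)⁻¹ * k * x * k) * x⁻¹ := by group
      _ = x * ((x * k) * ((x * k) * (x * k))) * x⁻¹ := by
          rw [← hinv, inv_inv]
          simp only [mul_assoc]
      _ = 1 := by rw [← pow_three, hk, mul_one, mul_inv_cancel]
  have h := key g hxg
  have h' := congrArg (·⁻¹) (key g⁻¹ hxg')
  simp only [← conj_inv, ← mul_inv_rev, inv_inv] at h'
  exact ⟨inv_injective (h.symm.trans h'), h⟩

theorem card_filter_cubeRootCosets_le (g y : G) :
    #{x ∈ cubeRootCosets g | x * g * x⁻¹ = y} ≤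
      Nat.card (Subgroup.centralizer {g} ⊓ Subgroup.centralizer {y} : Subgroup G) := by
  obtain h | ⟨z, hz⟩ := ({x ∈ cubeRootCosets g | x * g * x⁻¹ = y} : Finset G).eq_empty_or_nonempty
  · simp [h]
  obtain ⟨hzC, rfl⟩ := mem_filter.1 hz
  rw [← card_filter_mk_eq _ (z : G ⧸ (Subgroup.centralizer {g} ⊓ Subgroup.centralizer _))]
  refine card_le_card fun x hx => (mem_filter_univ _).2 ?_
  obtain ⟨hx, hxz⟩ := mem_filter.1 hx
  have h := (commute_and_conj_eq_of_mem_cubeRootCosets hx).2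
  rw [hxz, ← (commute_and_conj_eq_of_mem_cubeRootCosets hzC).2] at h
  exact QuotientGroup.eq.2 ⟨QuotientGroup.eq.1 (mk_centralizer_eq_iff.2 hxz),
    QuotientGroup.eq.1 (mk_centralizer_eq_iff.2 h)⟩

theorem card_cubeRootCosets_eq (g : G) :
    #(cubeRootCosets g) = ∑ y with IsConj g y, #{x ∈ cubeRootCosets g | x * g * x⁻¹ = y} :=
  card_eq_sum_card_fiberwise fun x _ => mem_coe.2 ((mem_filter_univ _).2 (isConj_iff.2 ⟨x, rfl⟩))

theorem card_cubeRootCosets_le (g : G) :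
    #(cubeRootCosets g) ≤ ∑ y with IsConj g y,
      Nat.card (Subgroup.centralizer {g} ⊓ Subgroup.centralizer {y} : Subgroup G) := by
  rw [card_cubeRootCosets_eq]
  exact sum_le_sum fun y _ => card_filter_cubeRootCosets_le g y

theorem card_cubeRootCosets_add_le (hg : g ≠ 1) (hreal : IsConj g g⁻¹) :
    #(cubeRootCosets g) + Nat.card (Subgroup.centralizer {g}) ≤ ∑ y with IsConj g y,
      Nat.card (Subgroup.centralizer {g} ⊓ Subgroup.centralizer {y} : Subgroup G) := by
  have hmem : g⁻¹ ∈ ({y | IsConj g y} : Finset G) := (mem_filter_univ _).2 hreal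
  have hempty : ({x ∈ cubeRootCosets g | x * g * x⁻¹ = g⁻¹} : Finset G) = ∅ := by
    refine filter_eq_empty_iff.2 fun x hx hxg => hg ?_
    have h := (commute_and_conj_eq_of_mem_cubeRootCosets hx).2
    rw [hxg, mul_inv_cancel, inv_one, conj_eq_one_iff] at h
    exact inv_eq_one.1 h
  have hinf : Subgroup.centralizer {g} ⊓ Subgroup.centralizer {g⁻¹} =
      Subgroup.centralizer {g} := by
    refine inf_eq_left.2 fun x hx => ?_
    rw [Subgroup.mem_centralizer_singleton_iff] at hx ⊢
    exact Commute.inv_right hx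
  rw [card_cubeRootCosets_eq, ← add_sum_erase _ _ hmem, ← add_sum_erase _ _ hmem, hempty, hinf,
    card_empty, zero_add, add_comm]
  gcongr with y
  exact card_filter_cubeRootCosets_le g y

end CosetCount

/-! ### Simple groups of order divisible by nine -/

section SylowCentralizer

variable {G : Type*} [Group G] [Finite G] {g x : G}

theorem mem_normalizer_closure {s : Set G}
    (h : ∀ a ∈ s, x * a * x⁻¹ ∈ Subgroup.closure s) :
    x ∈ Subgroup.normalizer (Subgroup.closure s : Set G) := by
  have hle : Subgroup.closure s ≤ (Subgroup.closure s).comap (MulAut.conj x).toMonoidHom :=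
    (Subgroup.closure_le _).2 h
  exact Subgroup.mem_normalizer_fintype fun a ha => hle ha

theorem not_three_dvd_index_centralizer {P : Sylow 3 G} (hP : (P : Subgroup G) ≤ .centralizer {g}) :
    ¬ 3 ∣ (Subgroup.centralizer {g}).index := fun h =>
  P.not_dvd_index (h.trans (Subgroup.index_dvd_of_le hP))

theorem exists_dvd_index_centralizer [IsSimpleGroup G] (hG : ¬ Group.IsSolvable G)
    (hg : g ≠ g⁻¹) (hreal : IsConj g g⁻¹) :
    ∃ m, m ∣ (Subgroup.centralizer {g}).index ∧ 2 * m ≤ (Subgroup.centralizer {g}).index ∧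
      Nat.card G ∣ m.factorial := by
  obtain ⟨x, hx⟩ := isConj_iff.1 hreal
  let N := Subgroup.normalizer (Subgroup.zpowers g : Set G)
  have hxN : x ∈ N := by
    rw [show N = Subgroup.normalizer (Subgroup.closure {g} : Set G) by
      rw [← Subgroup.zpowers_eq_closure]]
    refine mem_normalizer_closure fun a ha => ?_
    rw [Set.mem_singleton_iff.1 ha, hx]
    exact inv_mem (Subgroup.mem_closure_singleton_self g)
  have hN : N ≠ ⊤ := fun h => by
    have hbot := SolvableRadicalTrivial.of_isSimpleGroup hG _ (Subgroup.normalizer_eq_top_iff.1 h)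
      inferInstance
    rw [Subgroup.zpowers_eq_bot] at hbot
    simp [hbot] at hg
  have hCN : Subgroup.centralizer {g} ≤ N := by
    rw [← Subgroup.centralizer_closure, ← Subgroup.zpowers_eq_closure]
    exact Subgroup.centralizer_le_normalizer _
  have hrel : 2 ≤ (Subgroup.centralizer {g}).relIndex N := by
    have h0 : (Subgroup.centralizer {g}).relIndex N ≠ 0 := Subgroup.index_ne_zero_of_finite
    have h1 : (Subgroup.centralizer {g}).relIndex N ≠ 1 := fun h => hg <| by
      rw [← hx, Subgroup.mem_centralizer_singleton_iff.1 (Subgroup.relIndex_eq_one.1 h hxN),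
        mul_inv_cancel_right]
    omega
  rw [← Subgroup.relIndex_mul_index hCN]
  exact ⟨N.index, dvd_mul_left _ _, Nat.mul_le_mul_right _ hrel, card_dvd_factorial_index hN⟩

theorem fourteen_le_index_centralizer [IsSimpleGroup G] (hG : ¬ Group.IsSolvable G)
    (h9 : 9 ∣ Nat.card G) (hg : g ≠ g⁻¹) (hreal : IsConj g g⁻¹) {P : Sylow 3 G}
    (hP : (P : Subgroup G) ≤ .centralizer {g}) : 14 ≤ (Subgroup.centralizer {g}).index := by
  obtain ⟨m, hmd, hm2, hmG⟩ := exists_dvd_index_centralizer hG hg hreal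
  have h3 : ¬ 3 ∣ m := fun h => not_three_dvd_index_centralizer hP (h.trans hmd)
  have hm : 9 ∣ m.factorial := h9.trans hmG
  suffices 7 ≤ m by omega
  by_contra! hlt
  interval_cases m <;> revert h3 hm <;> decide

theorem twenty_le_index_centralizer [IsSimpleGroup G] (hG : ¬ Group.IsSolvable G)
    (h27 : 27 ∣ Nat.card G) (hg : g ≠ g⁻¹) (hreal : IsConj g g⁻¹) {P : Sylow 3 G}
    (hP : (P : Subgroup G) ≤ .centralizer {g}) : 20 ≤ (Subgroup.centralizer {g}).index := by
  obtain ⟨m, hmd, hm2, hmG⟩ := exists_dvd_index_centralizer hG hg hreal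
  have h3 : ¬ 3 ∣ m := fun h => not_three_dvd_index_centralizer hP (h.trans hmd)
  have hm : 27 ∣ m.factorial := h27.trans hmG
  suffices 10 ≤ m by omega
  by_contra! hlt
  interval_cases m <;> revert h3 hm <;> decide

end SylowCentralizer

section NineDvd

variable {G : Type*} [Group G] [Fintype G] {g x : G}

theorem ten_mul_card_le (hg : orderOf g = 3) :
    10 * Nat.card G ≤ 3 * ∑ x : G, orderOf x + 4 * #(involutionCosets g) +
      6 * #(mixedCosets g) + #(cubeRootCosets g) := by
  have h4 := four_mul_card_add_le (G := G) ∅ (k := 0) (by simp)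
  have h3 := three_mul_card_le hg
  omega

theorem isPGroup_closure_of_mem_cubeRootCosets (hg : g ^ 3 = 1) (hx : x ∈ cubeRootCosets g) :
    IsPGroup 3 (Subgroup.zpowers x ⊔ Subgroup.closure {g, x * g * x⁻¹} : Subgroup G) := by
  obtain ⟨hcomm, hconj⟩ := commute_and_conj_eq_of_mem_cubeRootCosets hx
  have hpow {w : G} (hw : w ^ 3 = 1) : IsPGroup 3 (Subgroup.zpowers w) :=
    IsPGroup.of_card_dvd_pow (n := 1) (by
      rw [Nat.card_zpowers, pow_one]
      exact orderOf_dvd_of_pow_eq_one hw)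
  have hpair : IsPGroup 3 (Subgroup.closure {g, x * g * x⁻¹} : Subgroup G) := by
    rw [Set.insert_eq, Subgroup.closure_union, ← Subgroup.zpowers_eq_closure]
    refine IsPGroup.to_sup_of_normal_right' (hpow hg) ?_ ?_
    · rw [← Subgroup.zpowers_eq_closure]
      exact hpow (by rw [conj_pow, hg, mul_one, mul_inv_cancel])
    · refine Subgroup.zpowers_le.2 (mem_normalizer_closure ?_)
      rintro _ rfl
      rw [hcomm.eq, mul_inv_cancel_right]
      exact Subgroup.mem_closure_singleton_self _
  refine IsPGroup.to_sup_of_normal_right' (hpow ((mem_filter_univ _).1 hx).1) hpair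
    (Subgroup.zpowers_le.2 (mem_normalizer_closure ?_))
  have hgm : g ∈ Subgroup.closure {g, x * g * x⁻¹} := Subgroup.mem_closure_of_mem (by simp)
  have hym : x * g * x⁻¹ ∈ Subgroup.closure {g, x * g * x⁻¹} :=
    Subgroup.mem_closure_of_mem (by simp)
  rintro a (rfl | rfl)
  · exact hym
  · exact hconj ▸ inv_mem (mul_mem hgm hym)

theorem commute_of_mem_cubeRootCosets (h3 : 3 ∣ Nat.card G) (h27 : ¬ 27 ∣ Nat.card G)
    (hg : g ^ 3 = 1) (hx : x ∈ cubeRootCosets g) : Commute x g := by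
  obtain ⟨Q, hQ⟩ := (isPGroup_closure_of_mem_cubeRootCosets hg hx).exists_le_sylow
  have := isMulCommutative_of_card_eq_three_or_nine (card_sylow_three_eq h3 h27 Q)
  exact setLike_mul_comm (hQ (Subgroup.mem_sup_left (Subgroup.mem_zpowers x)))
    (hQ (Subgroup.mem_sup_right (Subgroup.mem_closure_of_mem (Set.mem_insert g _))))

theorem card_cubeRootCosets_le_card_centralizer (h3 : 3 ∣ Nat.card G) (h27 : ¬ 27 ∣ Nat.card G)
    (hg : g ^ 3 = 1) : #(cubeRootCosets g) ≤ Nat.card (Subgroup.centralizer {g}) := by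
  rw [← card_filter_mem_subgroup]
  refine card_le_card fun x hx => (mem_filter_univ _).2 ?_
  exact Subgroup.mem_centralizer_singleton_iff.2 (commute_of_mem_cubeRootCosets h3 h27 hg hx)

theorem lt_sum_orderOf_of_nine_dvd_of_not_twentySeven_dvd [IsSimpleGroup G]
    (hG : ¬ Group.IsSolvable G) (h9 : 9 ∣ Nat.card G) (h27 : ¬ 27 ∣ Nat.card G) :
    311 * Nat.card G < 100 * ∑ x : G, orderOf x := by
  have h3 : 3 ∣ Nat.card G := (by norm_num : 3 ∣ 9).trans h9
  have P : Sylow 3 G := default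
  obtain ⟨g, hgP, hg, hreal⟩ := exists_orderOf_eq_three_isConj_inv hG h3 h27 P
  have hg3 : g ^ 3 = 1 := hg ▸ pow_orderOf_eq_one g
  have hPC : (P : Subgroup G) ≤ .centralizer {g} := fun a ha => by
    have := isMulCommutative_of_card_eq_three_or_nine (card_sylow_three_eq h3 h27 P)
    exact Subgroup.mem_centralizer_singleton_iff.2 (setLike_mul_comm ha hgP)
  have hP9 : 9 ∣ Nat.card P := P.pow_dvd_card_of_pow_dvd_card (n := 2) h9
  have hC9 := Nat.le_of_dvd Nat.card_pos (hP9.trans (Subgroup.card_dvd_of_le hPC))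
  have hb := fourteen_le_index_centralizer hG h9 (ne_inv_of_orderOf_eq_three hg) hreal hPC
  have hinv := card_involutionCosets_le g
  have hmix := two_mul_card_mixedCosets_le hg hreal
  have hcube := card_cubeRootCosets_le_card_centralizer h3 h27 hg3
  have hcard := Subgroup.card_mul_index (Subgroup.centralizer {g})
  by_contra hcon
  have hten := ten_mul_card_le hg
  have hbound : 67 * (Nat.card (Subgroup.centralizer {g}) * (Subgroup.centralizer {g}).index) ≤
      500 * Nat.card (Subgroup.centralizer {g}) + 300 * (Subgroup.centralizer {g}).index := by
    omega
  have hC : Nat.card (Subgroup.centralizer {g}) = 9 := by nlinarith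
  have hb' : (Subgroup.centralizer {g}).index = 14 := by rw [hC] at hbound; omega
  rw [hC, hb'] at hcard
  have hlt := four_mul_card_lt (G := G) (p := 7) (by norm_num) (by norm_num) (by omega)
  have hthree := three_mul_card_le hg
  omega

end NineDvd

section TwentySevenDvd

theorem mem_of_odd_orderOf {G : Type*} [Group G] [Finite G] {A B : Subgroup G}
    (h : Nat.card A < 3 * Nat.card (A ⊓ B : Subgroup G)) {x : G} (hx : x ∈ A)
    (hodd : Odd (orderOf x)) : x ∈ B := by
  have hcard : Nat.card (A ⊓ B : Subgroup G) * B.relIndex A = Nat.card A := by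
    rw [← Subgroup.inf_relIndex_left, ← Subgroup.relIndex_bot_left, ← Subgroup.relIndex_bot_left]
    exact Subgroup.relIndex_mul_relIndex _ _ _ bot_le inf_le_left
  have hpos : B.relIndex A ≠ 0 := Subgroup.index_ne_zero_of_finite
  have hlt : B.relIndex A < 3 := by
    by_contra! hle
    have := Nat.mul_le_mul_left (Nat.card (A ⊓ B : Subgroup G)) hle
    omega
  have hsq : x ^ 2 ∈ B := by
    obtain h1 | h2 : B.relIndex A = 1 ∨ B.relIndex A = 2 := by omega
    · exact pow_mem (Subgroup.relIndex_eq_one.1 h1 hx) 2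
    · rw [pow_two]
      exact Subgroup.mul_self_mem_of_index_two h2 ⟨x, hx⟩
  obtain ⟨j, hj⟩ := hodd
  have hx' : x = (x ^ 2) ^ (j + 1) := by
    rw [← pow_mul, mul_add, mul_one, pow_succ, ← hj, pow_orderOf_eq_one, one_mul]
  exact hx' ▸ pow_mem hsq _

/-- The subgroup generated by the elements of odd order of `A`. It is normalized by every element
that conjugates `A` to a subgroup meeting `A` in more than a third of its elements. -/
def oddGenerated {G : Type*} [Group G] (A : Subgroup G) : Subgroup G :=
  Subgroup.closure {x | x ∈ A ∧ Odd (orderOf x)}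

theorem oddGenerated_le {G : Type*} [Group G] (A : Subgroup G) : oddGenerated A ≤ A :=
  (Subgroup.closure_le A).2 fun _ ha => ha.1

variable {G : Type*} [Group G] [Finite G] {g x : G}

theorem mem_normalizer_oddGenerated_centralizer
    (h : Nat.card (Subgroup.centralizer {g}) <
      3 * Nat.card (.centralizer {g} ⊓ .centralizer {x * g * x⁻¹} : Subgroup G)) :
    x ∈ Subgroup.normalizer (oddGenerated (.centralizer {g}) : Set G) := by
  rw [← inv_mem_iff]
  refine mem_normalizer_closure fun a ⟨hag, hodd⟩ => Subgroup.mem_closure_of_mem ⟨?_, ?_⟩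
  · have ha := Subgroup.mem_centralizer_singleton_iff.1 (mem_of_odd_orderOf h hag hodd)
    rw [Subgroup.mem_centralizer_singleton_iff, inv_inv]
    calc x⁻¹ * a * x * g = x⁻¹ * (a * (x * g * x⁻¹)) * x := by group
      _ = g * (x⁻¹ * a * x) := by rw [ha]; group
  · have hconj : SemiconjBy x⁻¹ a (x⁻¹ * a * x⁻¹⁻¹) := by simp [SemiconjBy]
    rwa [← hconj.orderOf_eq]

theorem nine_le_index [IsSimpleGroup G] (h27 : 27 ∣ Nat.card G) {H : Subgroup G} (hH : H ≠ ⊤) :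
    9 ≤ H.index := by
  have hdvd : 27 ∣ H.index.factorial := h27.trans (card_dvd_factorial_index hH)
  by_contra! hlt
  generalize H.index = m at hdvd hlt
  interval_cases m <;> revert hdvd <;> decide

theorem nine_mul_card_normalizer_oddGenerated_le [IsSimpleGroup G] (hG : ¬ Group.IsSolvable G)
    (h27 : 27 ∣ Nat.card G) (hg : orderOf g = 3) :
    9 * Nat.card (Subgroup.normalizer (oddGenerated (.centralizer {g}) : Set G)) ≤ Nat.card G := by
  have hg1 : g ≠ 1 := fun h => by simp [h] at hg
  have hgm : g ∈ oddGenerated (.centralizer {g}) :=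
    Subgroup.mem_closure_of_mem ⟨Subgroup.mem_centralizer_singleton_iff.2 rfl, hg ▸ by decide⟩
  have hne : Subgroup.normalizer (oddGenerated (.centralizer {g}) : Set G) ≠ ⊤ := fun h => by
    have hnormal := Subgroup.normalizer_eq_top_iff.1 h
    obtain hbot | htop := hnormal.eq_bot_or_eq_top
    · exact hg1 (Subgroup.mem_bot.1 (hbot ▸ hgm))
    · refine hg1 ((SolvableRadicalTrivial.of_isSimpleGroup hG).eq_one_of_forall_commute fun x => ?_)
      exact Subgroup.mem_centralizer_singleton_iff.1
        (oddGenerated_le _ (htop ▸ Subgroup.mem_top x))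
  rw [← Subgroup.card_mul_index (Subgroup.normalizer (oddGenerated (.centralizer {g}) : Set G)),
    mul_comm]
  exact Nat.mul_le_mul_left _ (nine_le_index h27 hne)

theorem exists_orderOf_eq_three_le_centralizer (h3 : 3 ∣ Nat.card G) (P : Sylow 3 G) :
    ∃ g : G, orderOf g = 3 ∧ (P : Subgroup G) ≤ .centralizer {g} := by
  have : Nontrivial P := (Subgroup.nontrivial_iff_ne_bot _).2 (P.ne_bot_of_dvd_card h3)
  have := P.isPGroup'.center_nontrivial
  obtain ⟨k, hk0, hk⟩ :=
    (P.isPGroup'.to_subgroup (Subgroup.center P)).nontrivial_iff_card.1 inferInstance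
  obtain ⟨z, hz⟩ := exists_prime_orderOf_dvd_card' 3 (hk ▸ dvd_pow_self 3 hk0.ne')
  refine ⟨z, by rwa [Subgroup.orderOf_coe, Subgroup.orderOf_coe], fun a ha => ?_⟩
  exact Subgroup.mem_centralizer_singleton_iff.2
    (congrArg Subtype.val (Subgroup.mem_center_iff.1 z.2 ⟨a, ha⟩))

theorem sum_card_centralizer_inf_le [Fintype G] [IsSimpleGroup G] (hG : ¬ Group.IsSolvable G)
    (h27 : 27 ∣ Nat.card G) (hg : orderOf g = 3) :
    27 * ∑ y with IsConj g y, Nat.card (.centralizer {g} ⊓ .centralizer {y} : Subgroup G) ≤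
      11 * Nat.card G := by
  let N := Subgroup.normalizer (oddGenerated (.centralizer {g}) : Set G)
  let c := Nat.card (Subgroup.centralizer {g})
  have hterm (x : G) (_ : x ∈ univ) :
      3 * Nat.card (.centralizer {g} ⊓ .centralizer {x * g * x⁻¹} : Subgroup G) ≤
        c + 2 * c * (if x ∈ N then 1 else 0) := by
    have hle : Nat.card (.centralizer {g} ⊓ .centralizer {x * g * x⁻¹} : Subgroup G) ≤ c :=
      Nat.le_of_dvd Nat.card_pos (Subgroup.card_dvd_of_le inf_le_left)
    split_ifs with hx
    · omega
    · have := mt mem_normalizer_oddGenerated_centralizer hx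
      omega
  have hsum := sum_le_sum hterm
  rw [← mul_sum, sum_conj g fun y => Nat.card (.centralizer {g} ⊓ .centralizer {y} : Subgroup G),
    sum_add_distrib, ← mul_sum, ← card_filter, card_filter_mem_subgroup, sum_const, card_univ,
    smul_eq_mul, ← Nat.card_eq_fintype_card] at hsum
  have hN := nine_mul_card_normalizer_oddGenerated_le hG h27 hg
  have hc : 0 < c := Nat.card_pos
  refine Nat.le_of_mul_le_mul_left ?_ hc
  nlinarith [Nat.mul_le_mul_left (2 * c) hN]

theorem lt_sum_orderOf_of_twentySeven_dvd [Fintype G] [IsSimpleGroup G] (hG : ¬ Group.IsSolvable G)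
    (h27 : 27 ∣ Nat.card G) : 311 * Nat.card G < 100 * ∑ x : G, orderOf x := by
  have P : Sylow 3 G := default
  obtain ⟨g, hg, hPC⟩ := exists_orderOf_eq_three_le_centralizer ((by norm_num : 3 ∣ 27).trans h27) P
  have hP27 : 27 ∣ Nat.card P := P.pow_dvd_card_of_pow_dvd_card (n := 3) h27
  have hC27 := Nat.le_of_dvd Nat.card_pos (hP27.trans (Subgroup.card_dvd_of_le hPC))
  have hcard := Subgroup.card_mul_index (Subgroup.centralizer {g})
  have hten := ten_mul_card_le hg
  have hsum := sum_card_centralizer_inf_le hG h27 hg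
  have hpos : 0 < Nat.card G := Nat.card_pos
  by_contra hcon
  by_cases hreal : IsConj g g⁻¹
  · have hg1 : g ≠ 1 := fun h => by simp [h] at hg
    have hb := twenty_le_index_centralizer hG h27 (ne_inv_of_orderOf_eq_three hg) hreal hPC
    have hinv := card_involutionCosets_le g
    have hmix := two_mul_card_mixedCosets_le hg hreal
    have hcube := card_cubeRootCosets_add_le hg1 hreal
    have hmul := Nat.mul_le_mul_left (Nat.card (Subgroup.centralizer {g})) hb
    have hmul' := Nat.mul_le_mul_right (Subgroup.centralizer {g}).index hC27
    omega
  · have hinv := congrArg card (involutionCosets_eq_empty hreal)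
    have hmix := card_mixedCosets_le g
    have hcube := card_cubeRootCosets_le g
    have hmul := Nat.mul_le_mul_right (Subgroup.centralizer {g}).index hC27
    rw [card_empty] at hinv
    omega

end TwentySevenDvd

theorem lt_sum_orderOf_of_isSimpleGroup {G : Type*} [Group G] [Fintype G] [IsSimpleGroup G]
    (hG : ¬ Group.IsSolvable G) : 311 * Nat.card G < 100 * ∑ x : G, orderOf x := by
  by_cases h3 : 3 ∣ Nat.card G
  · by_cases h9 : 9 ∣ Nat.card G
    · by_cases h27 : 27 ∣ Nat.card G
      · exact lt_sum_orderOf_of_twentySeven_dvd hG h27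
      · exact lt_sum_orderOf_of_nine_dvd_of_not_twentySeven_dvd hG h9 h27
    · exact lt_sum_orderOf_of_three_dvd_of_not_nine_dvd hG h3 h9
  · exact lt_sum_orderOf_of_not_three_dvd hG h3

/-! ### Elements of order two and three in a coset of a normal subgroup -/

section NormalCosets

variable {G : Type*} [Group G] [Fintype G] {S : Subgroup G}

theorem exists_forall_mul_mul_of_card_mul_lt [S.Normal] {ι : Type*} [Fintype ι] {P : G → Prop}
    {q : G ⧸ S} (h : Fintype.card ι * #{x : G | (x : G ⧸ S) = q ∧ ¬ P x} < Nat.card S)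
    (a b : ι → S) : ∃ w : G, ∀ i, P (a i * w * b i) := by
  by_contra! hcon
  have hcover : ({x : G | (x : G ⧸ S) = q} : Finset G) ⊆
      univ.biUnion fun i => {x : G | (x : G ⧸ S) = q ∧ ¬ P (a i * x * b i)} := fun x hx => by
    obtain ⟨i, hi⟩ := hcon x
    exact mem_biUnion.2 ⟨i, mem_univ i, (mem_filter_univ _).2 ⟨(mem_filter_univ x).1 hx, hi⟩⟩
  have htranslate (i : ι) : #{x : G | (x : G ⧸ S) = q ∧ ¬ P (a i * x * b i)} ≤
      #{x : G | (x : G ⧸ S) = q ∧ ¬ P x} := by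
    refine card_le_card_of_injOn (fun x => a i * x * b i) (fun x hx => ?_) fun x _ y _ hxy => ?_
    · obtain ⟨hxq, hxP⟩ := (mem_filter_univ _).1 hx
      refine (mem_filter_univ _).2 ⟨?_, hxP⟩
      rw [QuotientGroup.mk_mul_of_mem _ (b i).2, QuotientGroup.mk_mul,
        (QuotientGroup.eq_one_iff _).2 (a i).2, one_mul, hxq]
    · simpa using hxy
  have hcard := (card_le_card hcover).trans card_biUnion_le
  rw [card_filter_mk_eq] at hcard
  have := hcard.trans (sum_le_card_nsmul univ _ _ fun i _ => htranslate i)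
  rw [card_univ, smul_eq_mul] at this
  omega

theorem commute_conj_of_mem_cubeRootCosets {h u w : G} (hw : w ∈ cubeRootCosets h)
    (hwu : w * u ∈ cubeRootCosets (u⁻¹ * h * u)) (huw : u⁻¹ * w ∈ cubeRootCosets (u⁻¹ * h * u)) :
    Commute h (u⁻¹ * h * u) := by
  have inv_conj {x g : G} (hx : x ∈ cubeRootCosets g) : x⁻¹ * g * x = (g * (x * g * x⁻¹))⁻¹ := by
    have hx3 := inv_eq_mul_self_of_cube_eq_one ((mem_filter_univ x).1 hx).1
    calc x⁻¹ * g * x = x⁻¹ * g * x⁻¹⁻¹ := by rw [inv_inv]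
      _ = x * x * g * (x * x)⁻¹ := by rw [hx3]
      _ = x * (x * g * x⁻¹) * x⁻¹ := by group
      _ = (g * (x * g * x⁻¹))⁻¹ := (commute_and_conj_eq_of_mem_cubeRootCosets hx).2
  have hcomm : Commute (u⁻¹ * h * u) (w * h * w⁻¹) := by
    simpa [mul_assoc] using (commute_and_conj_eq_of_mem_cubeRootCosets hwu).1
  have hcomm' : Commute (u⁻¹ * h * u) (h * (w * h * w⁻¹)) := by
    have hinv := inv_conj huw
    have := (Commute.refl _).mul_right (commute_and_conj_eq_of_mem_cubeRootCosets huw).1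
    rw [← Commute.inv_right_iff, ← hinv] at this
    rw [← Commute.inv_right_iff, ← inv_conj hw]
    simpa [mul_assoc] using this
  have := hcomm'.mul_right hcomm.inv_right
  rw [mul_inv_cancel_right] at this
  exact this.symm

-- Membership of the three elements `w`, `w * u` and `u⁻¹ * w` in sets `cubeRootCosets _` amounts to
-- nine translates of `w` being cube roots of `1`, each failing on at most 11/300 of the coset.
theorem commute_conj_of_le_card_cube_roots_coset [S.Normal] {q : G ⧸ S}
    (hq : 289 * Nat.card S ≤ 300 * #{x : G | (x : G ⧸ S) = q ∧ x ^ 3 = 1}) (h u : S) :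
    Commute h (u⁻¹ * h * u) := by
  have hfail : Fintype.card (Fin 9) * #{x : G | (x : G ⧸ S) = q ∧ ¬ x ^ 3 = 1} < Nat.card S := by
    have hsplit := card_filter_add_card_filter_not (s := {x : G | (x : G ⧸ S) = q})
      fun x : G => x ^ 3 = 1
    rw [filter_filter, filter_filter, card_filter_mk_eq] at hsplit
    have : 0 < Nat.card S := Nat.card_pos
    rw [Fintype.card_fin]
    omega
  let k : S := u⁻¹ * h * u
  obtain ⟨w, hw⟩ := exists_forall_mul_mul_of_card_mul_lt hfail
    ![1, 1, 1, 1, 1, 1, u⁻¹, u⁻¹, u⁻¹] ![1, h, h⁻¹, u, u * k, u * k⁻¹, 1, k, k⁻¹]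
  have hcomm : Commute (h : G) ((u : G)⁻¹ * h * u) := by
    refine commute_conj_of_mem_cubeRootCosets (w := w) ?_ ?_ ?_ <;>
      refine (mem_filter_univ _).2 ⟨?_, ?_, ?_⟩
    · simpa using hw 0
    · simpa using hw 1
    · simpa using hw 2
    · simpa using hw 3
    · simpa [k, mul_assoc] using hw 4
    · simpa [k, mul_assoc] using hw 5
    · simpa using hw 6
    · simpa [k] using hw 7
    · simpa [k] using hw 8
  exact Subtype.ext hcomm.eq

theorem card_cube_roots_coset_lt [S.Normal] [Nontrivial S] (hS : SolvableRadicalTrivial S)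
    (q : G ⧸ S) : 300 * #{x : G | (x : G ⧸ S) = q ∧ x ^ 3 = 1} < 289 * Nat.card S := by
  by_contra! hq
  obtain ⟨h, hh⟩ := exists_ne (1 : S)
  refine hh (hS.eq_one_of_forall_commute_conj fun u => ?_)
  simpa using commute_conj_of_le_card_cube_roots_coset hq h u⁻¹

theorem card_sylow_mul_card_inf_normalizer {G : Type*} [Group G] [Finite G] {S : Subgroup G}
    {p : ℕ} [Fact p.Prime] (P : Sylow p S) :
    Nat.card (Sylow p S) * Nat.card
      (S ⊓ Subgroup.normalizer ((P : Subgroup S).map S.subtype : Set G) : Subgroup G) =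
    Nat.card S := by
  let N : Subgroup G := Subgroup.normalizer ((P : Subgroup S).map S.subtype : Set G)
  have hN : N.subgroupOf S = Subgroup.normalizer (P : Set S) := by
    rw [Subgroup.subgroupOf_normalizer_eq (Subgroup.map_subtype_le _), Subgroup.subgroupOf,
      Subgroup.comap_map_eq_self_of_injective S.subtype_injective]
    rfl
  rw [inf_comm, ← Subgroup.subgroupOf_map_subtype,
    Subgroup.card_map_of_injective S.subtype_injective, hN, P.card_eq_index_normalizer,
    Subgroup.index_mul_card]

theorem exists_thirty_mul_le_mul_card_sylow {H : Type*} [Group H] [Finite H] [Nontrivial H]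
    (hH : SolvableRadicalTrivial H) (hperf : commutator H = ⊤) :
    ∃ p : ℕ, p.Prime ∧ 30 * (p + Nat.card (Sylow p H)) ≤ 13 * (p * Nat.card (Sylow p H)) := by
  by_cases h5 : ∃ p, p.Prime ∧ 5 ≤ p ∧ p ∣ Nat.card H
  · obtain ⟨p, hp, hp5, hpd⟩ := h5
    have := Fact.mk hp
    have hn := hH.add_one_le_card_sylow hpd
    exact ⟨p, hp, by nlinarith⟩
  · have hp23 (p : ℕ) (hp : p.Prime) (hpd : p ∣ Nat.card H) : p = 2 ∨ p = 3 := by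
      by_contra! hne
      have := hp.two_le
      have h4 : p ≠ 4 := fun h => absurd (h ▸ hp) (by norm_num)
      exact h5 ⟨p, hp, by omega, hpd⟩
    have h3 : 3 ∣ Nat.card H := by
      by_contra h3
      have h2 : IsPGroup 2 H := IsPGroup.of_card <|
        Nat.eq_prime_pow_of_unique_prime_dvd Nat.card_pos.ne' fun {q} hq hqd =>
          (hp23 q hq hqd).resolve_right fun h => h3 (h ▸ hqd)
      have := isSolvable_of_isPGroup h2
      exact top_ne_bot (hH ⊤ inferInstance inferInstance)
    refine ⟨3, Nat.prime_three, ?_⟩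
    have hle := hH.add_one_le_card_sylow h3
    have h4 := card_sylow_ne_four_of_perfect (p := 3) hperf
    have h7 : Nat.card (Sylow 3 H) ≠ 7 := fun h => by
      have hdvd := (default : Sylow 3 H).card_dvd_index.trans (Subgroup.index_dvd_card _)
      simpa using hp23 7 (by norm_num) (h ▸ hdvd)
    have hmod : Nat.card (Sylow 3 H) % 3 = 1 := card_sylow_modEq_one 3 H
    omega

theorem thirty_mul_card_involutions_coset_le [Nontrivial S] (hS : SolvableRadicalTrivial S)
    (hperf : commutator S = ⊤) (q : G ⧸ S) :
    30 * #{x : G | (x : G ⧸ S) = q ∧ x ^ 2 = 1} ≤ 13 * Nat.card S := by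
  obtain ⟨p, hp, hpn⟩ := exists_thirty_mul_le_mul_card_sylow hS hperf
  have := Fact.mk hp
  let P : Sylow p S := default
  have h := mul_card_involutions_coset_le (P.isPGroup'.map S.subtype) (Subgroup.map_subtype_le _)
    (card_sylow_mul_card_inf_normalizer P).le q
  have hpos : 0 < p * Nat.card (Sylow p S) := Nat.mul_pos hp.pos Nat.card_pos
  refine Nat.le_of_mul_le_mul_left ?_ hpos
  nlinarith [Nat.mul_le_mul_right (Nat.card S) hpn]

end NormalCosets

/-! ### Reduction to simple groups -/

section Reduction

variable {G : Type*} [Group G] [Fintype G] {S : Subgroup G}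

-- Every `x` in the coset `q` has order a multiple of `orderOf q`.
theorem two_mul_orderOf_mul_card_le [S.Normal] (q : G ⧸ S) :
    2 * orderOf q * Nat.card S ≤ ∑ x ∈ {x : G | (x : G ⧸ S) = q}, orderOf x +
      orderOf q * #{x : G | (x : G ⧸ S) = q ∧ x ^ orderOf q = 1} := by
  have hterm (x : G) (hx : (x : G ⧸ S) = q) :
      2 * orderOf q ≤ orderOf x + orderOf q * if x ^ orderOf q = 1 then 1 else 0 := by
    obtain ⟨m, hm⟩ : orderOf q ∣ orderOf x := hx ▸ orderOf_map_dvd (QuotientGroup.mk' S) x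
    have hpos := orderOf_pos x
    by_cases hx1 : x ^ orderOf q = 1
    · rw [if_pos hx1]
      have := Nat.le_of_dvd hpos ⟨m, hm⟩
      omega
    · have hm2 : 2 ≤ m := by
        by_contra! hm2
        interval_cases m
        · omega
        · rw [mul_one] at hm
          exact hx1 (hm ▸ pow_orderOf_eq_one x)
      rw [if_neg hx1, hm]
      nlinarith
  calc 2 * orderOf q * Nat.card S = ∑ x ∈ {x : G | (x : G ⧸ S) = q}, 2 * orderOf q := by
        rw [sum_const, card_filter_mk_eq, smul_eq_mul, mul_comm]
    _ ≤ ∑ x ∈ {x : G | (x : G ⧸ S) = q},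
          (orderOf x + orderOf q * if x ^ orderOf q = 1 then 1 else 0) :=
        sum_le_sum fun x hx => hterm x ((mem_filter_univ x).1 hx)
    _ = _ := by rw [sum_add_distrib, ← mul_sum, ← card_filter, filter_filter]

theorem sum_orderOf_coset_one [S.Normal] :
    ∑ x ∈ {x : G | (x : G ⧸ S) = 1}, orderOf x = ∑ s : S, orderOf s := by
  rw [sum_subtype (p := (· ∈ S)) _ (fun x => by simp)]
  exact sum_congr rfl fun s _ => Subgroup.orderOf_coe s

theorem lt_sum_orderOf_coset [S.Normal] [Nontrivial S] (hrad : SolvableRadicalTrivial S)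
    (hperf : commutator S = ⊤) (hS : 311 * Nat.card S < 100 * ∑ s : S, orderOf s) (q : G ⧸ S) :
    311 * Nat.card S < 100 * ∑ x ∈ {x : G | (x : G ⧸ S) = q}, orderOf x := by
  have hpos : 0 < Nat.card S := Nat.card_pos
  have hq := orderOf_pos q
  have hsum := two_mul_orderOf_mul_card_le q
  obtain h1 | h2 | h3 | h4 : orderOf q = 1 ∨ orderOf q = 2 ∨ orderOf q = 3 ∨ 4 ≤ orderOf q := by
    omega
  · obtain rfl := orderOf_eq_one_iff.1 h1
    rwa [sum_orderOf_coset_one]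
  · have := thirty_mul_card_involutions_coset_le hrad hperf q
    rw [h2] at hsum
    omega
  · have := card_cube_roots_coset_lt hrad q
    rw [h3] at hsum
    omega
  · have hle : #{x : G | (x : G ⧸ S) = q ∧ x ^ orderOf q = 1} ≤ Nat.card S := by
      rw [← card_filter_mk_eq S q, ← filter_filter]
      exact card_filter_le _ _
    nlinarith [Nat.mul_le_mul_left (orderOf q) hle, Nat.mul_le_mul_right (Nat.card S) h4]

theorem lt_sum_orderOf_of_forall_coset {a b : ℕ}
    (h : ∀ q : G ⧸ S, a * Nat.card S < b * ∑ x ∈ {x : G | (x : G ⧸ S) = q}, orderOf x) :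
    a * Nat.card G < b * ∑ x : G, orderOf x := by
  calc a * Nat.card G = ∑ _q : G ⧸ S, a * Nat.card S := by
        rw [sum_const, card_univ, smul_eq_mul, ← Nat.card_eq_fintype_card,
          Subgroup.card_eq_card_quotient_mul_card_subgroup S]
        ring
    _ < ∑ q : G ⧸ S, b * ∑ x ∈ {x : G | (x : G ⧸ S) = q}, orderOf x :=
        sum_lt_sum_of_nonempty univ_nonempty fun q _ => h q
    _ = b * ∑ x : G, orderOf x := by rw [← mul_sum, sum_fiberwise]

theorem lt_sum_orderOf_of_quotient [S.Normal] {a b : ℕ}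
    (h : a * Nat.card (G ⧸ S) < b * ∑ q : G ⧸ S, orderOf q) :
    a * Nat.card G < b * ∑ x : G, orderOf x := by
  have hcoset (q : G ⧸ S) :
      Nat.card S * orderOf q ≤ ∑ x ∈ {x : G | (x : G ⧸ S) = q}, orderOf x := by
    rw [← card_filter_mk_eq S q, ← smul_eq_mul]
    refine card_nsmul_le_sum _ _ _ fun x hx => Nat.le_of_dvd (orderOf_pos x) ?_
    exact (mem_filter_univ x).1 hx ▸ orderOf_map_dvd (QuotientGroup.mk' S) x
  calc a * Nat.card G = Nat.card S * (a * Nat.card (G ⧸ S)) := by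
        rw [Subgroup.card_eq_card_quotient_mul_card_subgroup S]
        ring
    _ < Nat.card S * (b * ∑ q : G ⧸ S, orderOf q) := Nat.mul_lt_mul_of_pos_left h Nat.card_pos
    _ = b * ∑ q : G ⧸ S, Nat.card S * orderOf q := by rw [← mul_sum]; ring
    _ ≤ b * ∑ q : G ⧸ S, ∑ x ∈ {x : G | (x : G ⧸ S) = q}, orderOf x := by
        gcongr with q
        exact hcoset q
    _ = b * ∑ x : G, orderOf x := by rw [sum_fiberwise]

end Reduction

section MinimalNormal

variable {G : Type*} [Group G]

theorem commutator_eq_top_of_minimal_normal {S : Subgroup G}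
    (hS : Minimal (fun N : Subgroup G => N.Normal ∧ N ≠ ⊥) S) (hsol : ¬ Group.IsSolvable S) :
    commutator S = ⊤ := by
  have := hS.prop.1
  have hne : ⁅S, S⁆ ≠ ⊥ := fun hbot => hsol <| Group.isSolvable_of_comm fun a b => by
    have ha := Subgroup.commutator_eq_bot_iff_le_centralizer.1 hbot a.2
    exact Subtype.ext (Subgroup.mem_centralizer_iff.1 ha b b.2).symm
  have hcomm : ⁅S, S⁆ = S :=
    (Subgroup.commutator_le_left S S).antisymm
      (hS.le_of_le ⟨inferInstance, hne⟩ (Subgroup.commutator_le_left S S))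
  refine Subgroup.map_injective S.subtype_injective ?_
  rw [Subgroup.map_subtype_commutator, hcomm, ← MonoidHom.range_eq_map, Subgroup.range_subtype]

theorem isSimpleGroup_of_minimal_top [Nontrivial G]
    (h : Minimal (fun N : Subgroup G => N.Normal ∧ N ≠ ⊥) ⊤) : IsSimpleGroup G where
  eq_bot_or_eq_top_of_normal _ hN := or_iff_not_imp_left.2 fun hne =>
    top_le_iff.1 (h.le_of_le ⟨hN, hne⟩ le_top)

end MinimalNormal

theorem lt_sum_orderOf_of_not_isSolvable {G : Type*} [Group G] [Fintype G]
    (hG : ¬ Group.IsSolvable G) : 311 * Nat.card G < 100 * ∑ x : G, orderOf x := by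
  induction hn : Nat.card G using Nat.strong_induction_on generalizing G with
  | _ n ih =>
    subst hn
    by_contra hcon
    have hrad : SolvableRadicalTrivial G := by
      intro N hN hNsol
      by_contra hne
      have : Nontrivial N := N.nontrivial_iff_ne_bot.2 hne
      refine hcon (lt_sum_orderOf_of_quotient (S := N) (ih _ ?_ ?_ rfl))
      · rw [Subgroup.card_eq_card_quotient_mul_card_subgroup N]
        exact lt_mul_of_one_lt_right Nat.card_pos Finite.one_lt_card
      · exact fun hq => hG ((Group.isSolvable_iff_subgroup_quotient N).2 ⟨hNsol, hq⟩)
    have : Nontrivial G := by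
      by_contra h
      rw [not_nontrivial_iff_subsingleton] at h
      exact hG inferInstance
    obtain ⟨S, hS⟩ := {N : Subgroup G | N.Normal ∧ N ≠ ⊥}.toFinite.exists_minimal
      ⟨⊤, inferInstance, top_ne_bot⟩
    obtain ⟨hSn, hSne⟩ := hS.prop
    have hSsol : ¬ Group.IsSolvable S := fun h => hSne (hrad S hSn h)
    by_cases htop : S = ⊤
    · have := isSimpleGroup_of_minimal_top (htop ▸ hS)
      exact hcon (lt_sum_orderOf_of_isSimpleGroup hG)
    · have : Nontrivial S := S.nontrivial_iff_ne_bot.2 hSne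
      refine hcon (lt_sum_orderOf_of_forall_coset (S := S) (lt_sum_orderOf_coset
        (hrad.of_normal S) (commutator_eq_top_of_minimal_normal hS hSsol) (ih _ ?_ hSsol rfl)))
      exact lt_of_not_ge fun hle => htop (Subgroup.eq_top_of_le_card S hle)

theorem avgOrder_gt_of_not_solvable {G : Type*} [Group G] [Fintype G]
    (h : ¬ IsSolvable G) : 311 / 100 < avgOrder G := by
  have hsum : (311 * Nat.card G : ℚ) < 100 * ∑ x : G, (orderOf x : ℚ) := by
    exact_mod_cast lt_sum_orderOf_of_not_isSolvable h
  have hcard : (0 : ℚ) < Fintype.card G := by exact_mod_cast Fintype.card_pos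
  rw [Nat.card_eq_fintype_card] at hsum
  rw [avgOrder, div_lt_div_iff₀ (by norm_num) hcard]
  linarith
end
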